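/- Let r ≥ 4 and let p > 3 be prime, and let V be a quasi-Hermitian variety of PG(r,p^4) whose characteristic vector v^V belongs to C_p. If π is a plane of PG(r,p^4) that is not contained in V and no line of π meets π ∩ V in exactly p^4 - p + 1 points, then π ∩ V is either a classical unital of π, or the union of i distinct lines of π all passing through a common point, for some i with 1 ≤ i ≤ p^2 + 1. -/

import Mathlib

/-!
Common framework: `ProjPoint F n` is the set of points of the projective space
PG(n-1, |F|) (so PG(r, q²) corresponds to `n = r + 1` and `Fintype.card F = q ^ 2`).
Projective subspaces of projective dimension `k` are the submodules of `Fin n → F`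
of `finrank` equal to `k + 1`; lines have finrank 2, planes finrank 3 and
hyperplanes finrank `n - 1 = r`.
-/

open Module Matrix

/-- The points of the projective space PG(n-1, |F|): one-dimensional subspaces
of `F^n`. -/
def ProjPoint (F : Type) [Field F] (n : ℕ) : Type :=
  {W : Submodule F (Fin n → F) // finrank F W = 1}

/-- The set of projective points lying in a given subspace `W`. -/
def pointsIn (F : Type) [Field F] (n : ℕ) (W : Submodule F (Fin n → F)) :
    Set (ProjPoint F n) :=
  {P | P.1 ≤ W}

/-- The number of points of `V` lying in the subspace `W`. -/
noncomputable def secant (F : Type) [Field F] (n : ℕ) (V : Set (ProjPoint F n))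
    (W : Submodule F (Fin n → F)) : ℕ :=
  (V ∩ pointsIn F n W).ncard

/-- The characteristic vector of a set of projective points, with values in `F_p`. -/
noncomputable def charVec (F : Type) [Field F] (p n : ℕ) (S : Set (ProjPoint F n)) :
    ProjPoint F n → ZMod p :=
  Set.indicator S 1

/-- `C_p`: the `F_p`-code spanned by the characteristic vectors of hyperplanes. -/
def hypCode (F : Type) [Field F] (p n : ℕ) :
    Submodule (ZMod p) (ProjPoint F n → ZMod p) :=
  Submodule.span (ZMod p)
    {v | ∃ H : Submodule F (Fin n → F), finrank F H = n - 1 ∧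
      v = charVec F p n (pointsIn F n H)}

/-- A quasi-Hermitian variety of PG(r, q²): it has the size of a non-singular
Hermitian variety and the same two intersection numbers with hyperplanes.
(All identities are stated multiplied through by `q² - 1`.) -/
def IsQuasiHermitian (F : Type) [Field F] (q r : ℕ)
    (V : Set (ProjPoint F (r + 1))) : Prop :=
  (V.ncard : ℤ) * ((q : ℤ) ^ 2 - 1)
      = ((q : ℤ) ^ (r + 1) + (-1) ^ r) * ((q : ℤ) ^ r - (-1) ^ r) ∧
  ∀ H : Submodule F (Fin (r + 1) → F), finrank F H = r →
    ((secant F (r + 1) V H : ℤ) * ((q : ℤ) ^ 2 - 1)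
        = ((q : ℤ) ^ r + (-1) ^ (r - 1)) * ((q : ℤ) ^ (r - 1) - (-1) ^ (r - 1)) ∨
     (secant F (r + 1) V H : ℤ) * ((q : ℤ) ^ 2 - 1)
        = ((q : ℤ) ^ 2 - 1)
          + (q : ℤ) ^ 2 * (((q : ℤ) ^ (r - 1) + (-1) ^ r) * ((q : ℤ) ^ (r - 2) - (-1) ^ r)))

/-- The zero set, in PG(n-1,|F|), of the Hermitian form `x ↦ xᵀ A x^(q)`. -/
def hermSet (F : Type) [Field F] (q n : ℕ) (A : Matrix (Fin n) (Fin n) F) :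
    Set (ProjPoint F n) :=
  {P | ∀ x ∈ P.1, ∑ i, ∑ j, x i * A i j * (x j) ^ q = 0}

/-- A non-singular Hermitian variety of PG(n-1, q²). -/
def IsNonsingHermitian (F : Type) [Field F] (q n : ℕ)
    (V : Set (ProjPoint F n)) : Prop :=
  ∃ A : Matrix (Fin n) (Fin n) F, IsUnit A.det ∧
    Aᵀ = A.map (fun a => a ^ q) ∧ V = hermSet F q n A

/-- A singular Hermitian variety of PG(n-1, q²) whose singular space (the radical
of the Hermitian form) has projective dimension `d`. -/
def IsSingularHermitian (F : Type) [Field F] (q n d : ℕ)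
    (S : Set (ProjPoint F n)) : Prop :=
  ∃ A : Matrix (Fin n) (Fin n) F,
    Aᵀ = A.map (fun a => a ^ q) ∧
    finrank F (LinearMap.ker (Matrix.toLin' Aᵀ)) = d + 1 ∧
    S = hermSet F q n A

/-- A `d`-singular quasi-Hermitian variety of PG(r, q²). -/
def IsSingularQuasiHermitian (F : Type) [Field F] (q r d : ℕ)
    (S : Set (ProjPoint F (r + 1))) : Prop :=
  ∃ S₀ : Set (ProjPoint F (r + 1)), IsSingularHermitian F q (r + 1) d S₀ ∧
    S.ncard = S₀.ncard ∧
    ∀ H : Submodule F (Fin (r + 1) → F), finrank F H = r →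
      ∃ H₀ : Submodule F (Fin (r + 1) → F), finrank F H₀ = r ∧
        secant F (r + 1) S H = secant F (r + 1) S₀ H₀

/-- `U` is a classical unital (Hermitian curve) of the plane `π` of PG(n-1, q²):
in some coordinatization `e` of `π`, it is the zero set of a non-degenerate
Hermitian form on `F³`. -/
def IsClassicalUnital (F : Type) [Field F] (q n : ℕ)
    (π : Submodule F (Fin n → F)) (U : Set (ProjPoint F n)) : Prop :=
  ∃ e : (Fin 3 → F) →ₗ[F] (Fin n → F), LinearMap.ker e = ⊥ ∧ LinearMap.range e = π ∧
    ∃ A : Matrix (Fin 3) (Fin 3) F, IsUnit A.det ∧ Aᵀ = A.map (fun a => a ^ q) ∧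
      U = {P | ∃ y : Fin 3 → F, y ≠ 0 ∧ P.1 = Submodule.span F {e y} ∧
        ∑ i, ∑ j, y i * A i j * (y j) ^ q = 0}

set_option linter.unusedSectionVars false
namespace QH
open Configuration Finset
open scoped Classical

section comb
variable {P L : Type} [Membership P L] [Fintype P] [Fintype L]

/-- Number of points of `S` on the line `l`. -/
noncomputable def sz (S : Finset P) (l : L) : ℕ := (S.filter (fun R => R ∈ l)).card

/-- Number of lines of `A` through the point `R`. -/
noncomputable def deg (A : Finset L) (R : P) : ℕ := (A.filter (fun l => R ∈ l)).card

/-- Characteristic vector of a line. -/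
noncomputable def lineInd (p : ℕ) (l : L) : P → ZMod p := fun R => if R ∈ l then 1 else 0

/-- Characteristic vector of a finite set. -/
noncomputable def ind (p : ℕ) (U : Finset P) : P → ZMod p := fun R => if R ∈ U then 1 else 0

/-- Support. -/
noncomputable def supp {p : ℕ} (c : P → ZMod p) : Finset P := univ.filter (fun R => c R ≠ 0)

variable [ProjectivePlane P L] 

lemma card_lines_through (R : P) :
    (univ.filter (fun l : L => R ∈ l)).card = ProjectivePlane.order P L + 1 := by
  have h := ProjectivePlane.lineCount_eq (L := L) R
  rw [← h, lineCount, Nat.card_eq_fintype_card, Fintype.card_subtype]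

lemma sz_univ (l : L) : sz (univ : Finset P) l = ProjectivePlane.order P L + 1 := by
  have h := ProjectivePlane.pointCount_eq (P := P) l
  rw [← h, pointCount, Nat.card_eq_fintype_card, Fintype.card_subtype, sz]

lemma card_lines_two {R T : P} (h : R ≠ T) :
    (univ.filter (fun l : L => R ∈ l ∧ T ∈ l)).card = 1 := by
  obtain ⟨l, hl, hu⟩ := HasLines.existsUnique_line P L R T h
  rw [card_eq_one]
  refine ⟨l, ?_⟩
  ext m
  simp only [mem_filter, mem_univ, true_and, mem_singleton]
  exact ⟨fun hm => hu m hm, fun hm => hm ▸ hl⟩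

lemma card_points_two {l m : L} (h : l ≠ m) :
    (univ.filter (fun R : P => R ∈ l ∧ R ∈ m)).card = 1 := by
  obtain ⟨R, hl, hu⟩ := HasPoints.existsUnique_point P L l m h
  rw [card_eq_one]
  refine ⟨R, ?_⟩
  ext m
  simp only [mem_filter, mem_univ, true_and, mem_singleton]
  exact ⟨fun hm => hu m hm, fun hm => hm ▸ hl⟩

lemma sum_sz_through (S : Finset P) (R : P) :
    ∑ l ∈ univ.filter (fun l : L => R ∈ l), sz S l
      = S.card + (if R ∈ S then ProjectivePlane.order P L else 0) := by
  have h1 : ∀ l : L, sz S l = ∑ T ∈ S, if T ∈ l then 1 else 0 := by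
    intro l; rw [sz, card_filter]
  simp_rw [h1]
  rw [sum_comm]
  have h2 : ∀ T ∈ S, (∑ l ∈ univ.filter (fun l : L => R ∈ l), if T ∈ l then 1 else 0)
      = 1 + if T = R then ProjectivePlane.order P L else 0 := by
    intro T _
    rw [← card_filter, filter_filter]
    by_cases hT : T = R
    · subst hT
      simp only [and_self, if_true]
      rw [card_lines_through, add_comm]
    · rw [card_lines_two (Ne.symm hT)]; simp [hT]
  rw [sum_congr rfl h2, sum_add_distrib]
  simp

lemma sum_deg_on (A : Finset L) (l : L) :
    ∑ R ∈ univ.filter (fun R : P => R ∈ l), deg A R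
      = A.card + (if l ∈ A then ProjectivePlane.order P L else 0) := by
  have h1 : ∀ R : P, deg A R = ∑ m ∈ A, if R ∈ m then 1 else 0 := by
    intro l; rw [deg, card_filter]
  simp_rw [h1]
  rw [sum_comm]
  have h2 : ∀ m ∈ A, (∑ R ∈ univ.filter (fun R : P => R ∈ l), if R ∈ m then 1 else 0)
      = 1 + if m = l then ProjectivePlane.order P L else 0 := by
    intro m _
    rw [← card_filter, filter_filter]
    by_cases hT : m = l
    · subst hT
      simp only [and_self, if_true]
      have := sz_univ (P := P) m
      rw [sz] at this
      rw [this, add_comm]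
    · rw [card_points_two (Ne.symm hT)]; simp [hT]
  rw [sum_congr rfl h2, sum_add_distrib]
  simp

lemma sum_deg_mul (A : Finset L) (S : Finset P) :
    ∑ R ∈ S, deg A R = ∑ l ∈ A, sz S l := by
  simp only [deg, sz, card_filter]
  rw [sum_comm]

lemma sum_sz (S : Finset P) :
    ∑ l : L, sz S l = S.card * (ProjectivePlane.order P L + 1) := by
  rw [← sum_deg_mul]
  simp only [deg]
  simp_rw [card_lines_through]
  simp

lemma sum_sz_mul (S : Finset P) (A : Finset L) (f : L → ℕ) :
    ∑ R ∈ S, ∑ l ∈ A.filter (fun l => R ∈ l), f l = ∑ l ∈ A, sz S l * f l := by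
  simp_rw [sum_filter]
  rw [sum_comm]
  refine sum_congr rfl fun l _ => ?_
  rw [← sum_filter, sum_const, sz, smul_eq_mul]

lemma sum_sz_sq (S : Finset P) :
    ∑ l : L, sz S l * sz S l = S.card * (S.card + ProjectivePlane.order P L) := by
  rw [← sum_sz_mul, sum_congr rfl (fun R hR => by rw [sum_sz_through, if_pos hR])]
  simp

lemma sum_deg_mul' (A : Finset L) (f : P → ℕ) :
    ∑ l ∈ A, ∑ R ∈ univ.filter (fun R : P => R ∈ l), f R = ∑ R, deg A R * f R := by
  simp_rw [sum_filter]
  rw [sum_comm]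
  refine sum_congr rfl fun l _ => ?_
  rw [← sum_filter, sum_const, deg, smul_eq_mul]

lemma sum_deg (A : Finset L) :
    ∑ R : P, deg A R = A.card * (ProjectivePlane.order P L + 1) := by
  rw [sum_deg_mul]
  simp_rw [sz_univ]
  simp

lemma sum_deg_sq (A : Finset L) :
    ∑ R : P, deg A R * deg A R = A.card * (A.card + ProjectivePlane.order P L) := by
  rw [← sum_deg_mul', sum_congr rfl (fun R hR => by rw [sum_deg_on, if_pos hR])]
  simp

lemma sz_le (S : Finset P) (l : L) : sz S l ≤ ProjectivePlane.order P L + 1 := by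
  rw [← sz_univ l]
  exact card_le_card (filter_subset_filter _ (subset_univ _))

lemma sz_compl (S : Finset P) (l : L) :
    sz S l + sz Sᶜ l = ProjectivePlane.order P L + 1 := by
  rw [← sz_univ l, sz, sz, sz, ← card_union_of_disjoint]
  · congr 1; ext R; simp only [mem_union, mem_filter, mem_compl, mem_univ]; tauto
  · rw [disjoint_left]; intro R; simp only [mem_filter, mem_compl]; tauto

lemma supp_ind {p : ℕ} [Fact p.Prime] (U : Finset P) : supp (ind p U) = U := by
  ext R; simp [supp, ind]

lemma deg_cast {p : ℕ} (A : Finset L) (R : P) :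
    (∑ l ∈ A, lineInd p l) R = (deg A R : ZMod p) := by
  simp [lineInd, deg, Finset.sum_apply]

end comb
end QH

set_option linter.unusedSectionVars false
namespace QH
open Configuration Finset
open scoped Classical

/-- Properties of the code of a projective plane of order `q^2` which are used in the
combinatorial part. -/
structure GoodCode (P L : Type) [Membership P L] [Fintype P] [Fintype L] [ProjectivePlane P L]
    (p q : ℕ) (C : Submodule (ZMod p) (P → ZMod p)) : Prop where
  prime : p.Prime
  gt3 : 3 < p
  qp : q = p ^ 2
  ord : ProjectivePlane.order P L = q ^ 2
  line_mem : ∀ l : L, lineInd p l ∈ C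
  bound : ∀ c ∈ C, ∀ l : L, 2 * sz (supp c) l < q ^ 2 →
    sz (supp c) l * (q ^ 2 + 2) ≤ (supp c).card + sz (supp c) l * sz (supp c) l

section comb
variable {P L : Type} [Membership P L] [Fintype P] [Fintype L] [ProjectivePlane P L]
variable {p q : ℕ} {C : Submodule (ZMod p) (P → ZMod p)}

lemma mem_supp (c : P → ZMod p) (R : P) : R ∈ supp c ↔ c R ≠ 0 := by
  rw [supp, mem_filter]; simp

lemma GoodCode.q25 (h : GoodCode P L p q C) : 25 ≤ q := by
  have := h.gt3
  have h4 : p ≠ 4 := by rintro rfl; exact absurd h.prime (by norm_num)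
  have : 5 ≤ p := by omega
  rw [h.qp]; nlinarith

lemma exists_big (h : GoodCode P L p q C) {c : P → ZMod p} (hc : c ∈ C) {R : P} (hR : c R ≠ 0)
    (hs : ∀ l : L, R ∈ l → 2 * sz (supp c) l < q ^ 2) :
    ∃ l : L, R ∈ l ∧ q + 1 ≤ sz (supp c) l := by
  by_contra! hcon
  have hne : (univ.filter (fun l : L => R ∈ l)).Nonempty := by
    rw [← card_pos, card_lines_through]; omega
  obtain ⟨l, hl, hmax⟩ := exists_max_image _ (fun l => sz (supp c) l) hne
  have hlR : R ∈ l := by simpa using hl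
  have hsum := sum_sz_through (L := L) (supp c) R
  have hRs : R ∈ supp c := by simp [supp, hR]
  rw [if_pos hRs] at hsum
  have hle := sum_le_card_nsmul _ _ _ hmax
  rw [hsum, card_lines_through, h.ord, smul_eq_mul] at hle
  have hb := h.bound c hc l (hs l hlR)
  have ht := hcon l hlR
  set t := sz (supp c) l
  have hq := h.q25
  have ht' : t ≤ q := by omega
  nlinarith

lemma eq_zero_of_small (h : GoodCode P L p q C) {c : P → ZMod p} (hc : c ∈ C)
    (hs : ∀ l : L, 2 * sz (supp c) l < q ^ 2) (hw : (supp c).card ≤ q ^ 3) : c = 0 := by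
  funext R
  by_contra hR
  obtain ⟨l, hl, hb⟩ := exists_big h hc hR (fun l _ => hs l)
  have hbd := h.bound c hc l (hs l)
  have h2 := hs l
  generalize sz (supp c) l = t at *
  have hq := h.q25
  zify at *
  nlinarith [mul_nonneg (a := (t : ℤ) - (q + 1)) (b := (q : ℤ) ^ 2 + 1 - q - t)
    (by linarith) (by nlinarith)]

/-- The set `U` : a codeword with all line sizes one mod `p`. -/
structure GoodSet (L : Type) [Membership P L] (p : ℕ) (C : Submodule (ZMod p) (P → ZMod p))
    (U : Finset P) : Prop where
  mem : ind p U ∈ C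
  mod : ∀ l : L, sz U l ≡ 1 [MOD p]

lemma supp_sub (h : GoodCode P L p q C) (U : Finset P) (l : L) :
    supp (ind p U - lineInd p l) = (U.filter (fun R => ¬ R ∈ l)) ∪ (Uᶜ.filter (fun R => R ∈ l)) := by
  have := Fact.mk h.prime
  ext R
  by_cases h1 : R ∈ U <;> by_cases h2 : R ∈ l <;> simp [mem_supp, ind, lineInd, h1, h2]

lemma card_supp_sub (h : GoodCode P L p q C) (U : Finset P) (l : L) :
    (supp (ind p U - lineInd p l)).card + sz U l = U.card + sz Uᶜ l := by
  rw [supp_sub h, card_union_of_disjoint, sz, sz]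
  · have := card_filter_add_card_filter_not (s := U) (fun R => R ∈ l)
    omega
  · rw [disjoint_left]; intro R; simp only [mem_filter, mem_compl]; tauto

lemma sz_supp_sub (h : GoodCode P L p q C) (U : Finset P) (l : L) :
    sz (supp (ind p U - lineInd p l)) l = sz Uᶜ l := by
  rw [supp_sub h, sz, sz]
  congr 1; ext R; simp only [mem_filter, mem_compl, mem_union]; tauto

lemma size_bound (h : GoodCode P L p q C) {U : Finset P} (hU : GoodSet L p C U) (l : L)
    (hl : sz U l ≤ q ^ 2) : sz U l * (q ^ 2 + 2) ≤ U.card + sz U l * sz U l := by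
  have := Fact.mk h.prime
  rcases Nat.lt_or_ge (2 * sz U l) (q ^ 2) with h2 | h2
  · have := h.bound _ hU.mem l
    rw [supp_ind] at this
    exact this h2
  have hc := sz_compl U l
  rw [h.ord] at hc
  have hodd : Odd p := h.prime.odd_of_ne_two (by have := h.gt3; omega)
  have hqodd : Odd (q ^ 2) := by rw [h.qp]; exact (hodd.pow).pow
  obtain ⟨k, hk⟩ := hqodd
  by_cases h3 : 2 * sz U l = q ^ 2 + 1
  · exfalso
    have h4 : p ∣ q ^ 2 := by rw [h.qp, ← pow_mul]; exact dvd_pow_self p (by norm_num)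
    have h5 : 2 * sz U l ≡ 2 * 1 [MOD p] := (hU.mod l).mul_left 2
    have h6 : q ^ 2 + 1 ≡ 0 + 1 [MOD p] := ((Nat.modEq_zero_iff_dvd).2 h4).add_right 1
    rw [h3] at h5
    have h7 := h5.symm.trans h6
    have h8 := (Nat.modEq_iff_dvd' (n := p) (a := 1) (b := 2) (by norm_num)).1 h7.symm
    have := Nat.le_of_dvd (by norm_num) h8
    have := h.gt3
    omega
  · have hb := h.bound _ (C.sub_mem hU.mem (h.line_mem l)) l
    have h4 := card_supp_sub h U l
    rw [sz_supp_sub h] at hb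
    have hb' := hb (by omega)
    set s := sz U l
    set t := sz Uᶜ l
    set w := (supp (ind p U - lineInd p l)).card
    zify at *
    have e1 : (t : ℤ) = q ^ 2 + 1 - s := by linarith
    have e2 : (w : ℤ) = U.card + t - s := by linarith
    rw [e2, e1] at hb'
    nlinarith

end comb
end QH

set_option linter.unusedSectionVars false
namespace QH
open Configuration Finset
open scoped Classical

section comb
variable {P L : Type} [Membership P L] [Fintype P] [Fintype L] [ProjectivePlane P L]
variable {p q : ℕ} {C : Submodule (ZMod p) (P → ZMod p)}

/-- The set minus a sum of lines. -/
noncomputable def rest (p : ℕ) (U : Finset P) (A : Finset L) : P → ZMod p :=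
  ind p U - ∑ l ∈ A, lineInd p l

lemma rest_apply (U : Finset P) (A : Finset L) (R : P) :
    rest p U A R = (if R ∈ U then 1 else 0) - (deg A R : ZMod p) := by
  rw [rest, Pi.sub_apply, deg_cast]; rfl

lemma rest_mem (h : GoodCode P L p q C) {U : Finset P} (hU : GoodSet L p C U) (A : Finset L) :
    rest p U A ∈ C :=
  C.sub_mem hU.mem (C.sum_mem fun l _ => h.line_mem l)

lemma rest_ne {U : Finset P} {A : Finset L} {R : P} (hR : R ∈ supp (rest p U A)) :
    (R ∈ U ∧ deg A R ≠ 1) ∨ (R ∉ U ∧ deg A R ≠ 0) := by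
  rw [mem_supp, rest_apply] at hR
  by_cases h : R ∈ U
  · left; refine ⟨h, fun h1 => hR ?_⟩; simp [h, h1]
  · right; refine ⟨h, fun h1 => hR ?_⟩; simp [h, h1]

lemma card_supp_rest (U : Finset P) (A : Finset L) :
    ((supp (rest p U A)).card : ℤ) ≤ U.card - ∑ l ∈ A, (sz U l : ℤ) + A.card * (A.card - 1)
      + ∑ l ∈ A, (sz Uᶜ l : ℤ) := by
  have e1 : ∑ l ∈ A, (sz U l : ℤ) = ∑ R, if R ∈ U then (deg A R : ℤ) else 0 := by
    rw [← sum_filter, filter_mem_eq_inter, univ_inter]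
    exact_mod_cast (sum_deg_mul A U).symm
  have e2 : ∑ l ∈ A, (sz Uᶜ l : ℤ) = ∑ R, if R ∈ U then 0 else (deg A R : ℤ) := by
    have : ∑ R, (if R ∈ U then 0 else (deg A R : ℤ)) = ∑ R, if R ∈ Uᶜ then (deg A R : ℤ) else 0 := by
      refine sum_congr rfl fun R _ => ?_
      by_cases h : R ∈ U <;> simp [h]
    rw [this, ← sum_filter, filter_mem_eq_inter, univ_inter]
    exact_mod_cast (sum_deg_mul A Uᶜ).symm
  have e3 : (A.card : ℤ) * (A.card - 1) = ∑ R : P, (deg A R : ℤ) * (deg A R - 1) := by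
    have h1 := sum_deg (P := P) A
    have h2 := sum_deg_sq (P := P) A
    zify at h1 h2
    simp_rw [mul_sub, mul_one]
    rw [sum_sub_distrib, h1, h2]; ring
  have e4 : (U.card : ℤ) = ∑ R, if R ∈ U then 1 else 0 := by simp
  have e5 : ((supp (rest p U A)).card : ℤ) = ∑ R, if R ∈ supp (rest p U A) then 1 else 0 := by
    simp
  rw [e1, e2, e3, e4, e5, ← sum_sub_distrib, ← sum_add_distrib, ← sum_add_distrib]
  refine sum_le_sum fun R _ => ?_
  by_cases hs : R ∈ supp (rest p U A)
  · rcases rest_ne hs with ⟨h1, h2⟩ | ⟨h1, h2⟩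
    · simp only [hs, h1, if_true]
      rcases Nat.lt_or_ge (deg A R) 2 with h3 | h3
      · have : deg A R = 0 := by omega
        simp [this]
      · zify at h3; nlinarith
    · simp only [hs, h1, if_true, if_false]
      have h3 : 1 ≤ deg A R := by omega
      zify at h3; nlinarith
  · simp only [hs, if_false]
    have h0 : (0 : ℤ) ≤ deg A R := by positivity
    by_cases h1 : R ∈ U
    · simp only [h1, if_true]; nlinarith [sq_nonneg ((deg A R : ℤ) - 1)]
    · simp only [h1, if_false]; nlinarith

lemma card_ge_of_lines (U : Finset P) (A : Finset L) :
    2 * ∑ l ∈ A, (sz U l : ℤ) ≤ 2 * U.card + A.card * (A.card - 1) := by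
  have e1 : ∑ l ∈ A, (sz U l : ℤ) = ∑ R, if R ∈ U then (deg A R : ℤ) else 0 := by
    rw [← sum_filter, filter_mem_eq_inter, univ_inter]
    exact_mod_cast (sum_deg_mul A U).symm
  have e3 : (A.card : ℤ) * (A.card - 1) = ∑ R : P, (deg A R : ℤ) * (deg A R - 1) := by
    have h1 := sum_deg (P := P) A
    have h2 := sum_deg_sq (P := P) A
    zify at h1 h2
    simp_rw [mul_sub, mul_one]
    rw [sum_sub_distrib, h1, h2]; ring
  have e4 : (U.card : ℤ) = ∑ R, if R ∈ U then 1 else 0 := by simp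
  rw [e1, e3, e4, mul_sum, mul_sum, ← sum_add_distrib]
  refine sum_le_sum fun R _ => ?_
  by_cases h1 : R ∈ U
  · simp only [h1, if_true]
    rcases Nat.lt_or_ge (deg A R) 2 with h3 | h3
    · interval_cases (deg A R) <;> norm_num
    · zify at h3; nlinarith
  · simp only [h1, if_false]
    rcases Nat.eq_zero_or_pos (deg A R) with h3 | h3
    · simp [h3]
    · zify at h3; nlinarith

lemma sz_eq_sum (S : Finset P) (l : L) :
    sz S l = ∑ R ∈ univ.filter (fun R : P => R ∈ l), if R ∈ S then 1 else 0 := by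
  rw [sz, ← card_filter, filter_filter]
  congr 1; ext R; simp [and_comm]

lemma sz_supp_rest_notMem (U : Finset P) (A : Finset L) {m : L} (hm : m ∉ A) :
    sz (supp (rest p U A)) m ≤ sz U m + A.card := by
  have h1 := sum_deg_on (P := P) A m
  rw [if_neg hm, add_zero] at h1
  rw [← h1, sz_eq_sum, sz_eq_sum, ← sum_add_distrib]
  refine sum_le_sum fun R _ => ?_
  by_cases hs : R ∈ supp (rest p U A)
  · rcases rest_ne hs with ⟨h1, h2⟩ | ⟨h1, h2⟩
    · simp [hs, h1]
    · simp [hs, h1]; omega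
  · simp [hs]

lemma deg_pos {A : Finset L} {m : L} (hm : m ∈ A) {R : P} (hR : R ∈ m) : 1 ≤ deg A R := by
  rw [deg, Nat.one_le_iff_ne_zero, ← Nat.pos_iff_ne_zero, card_pos]
  exact ⟨m, by simp [hm, hR]⟩

lemma sz_supp_rest_mem (U : Finset P) (A : Finset L) {m : L} (hm : m ∈ A) :
    sz (supp (rest p U A)) m + 1 ≤ sz Uᶜ m + A.card := by
  have h1 := sum_deg_on (P := P) A m
  rw [if_pos hm] at h1
  have h2 := sz_univ (P := P) m
  have h3 : sz (supp (rest p U A)) m + sz (univ : Finset P) m ≤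
      sz Uᶜ m + (A.card + ProjectivePlane.order P L) := by
    rw [← h1, sz_eq_sum, sz_eq_sum, sz_eq_sum, ← sum_add_distrib, ← sum_add_distrib]
    refine sum_le_sum fun R hR => ?_
    have hk := deg_pos hm (by simpa using hR)
    by_cases hs : R ∈ supp (rest p U A)
    · rcases rest_ne hs with ⟨h1, h2⟩ | ⟨h1, h2⟩
      · simp [hs, h1]; omega
      · simp [hs, h1]; omega
    · simp [hs]; omega
  omega

lemma sum_deg_sub (A : Finset L) {m : L} (hm : m ∈ A) :
    ∑ R ∈ univ.filter (fun R : P => R ∈ m), (deg A R - 1) + 1 = A.card := by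
  have h1 := sum_deg_on (P := P) A m
  rw [if_pos hm] at h1
  have h2 := sz_univ (P := P) m
  have h3 : ∑ R ∈ univ.filter (fun R : P => R ∈ m), deg A R
      = ∑ R ∈ univ.filter (fun R : P => R ∈ m), (deg A R - 1) + sz (univ : Finset P) m := by
    rw [sz_eq_sum, ← sum_add_distrib]
    refine sum_congr rfl fun R hR => ?_
    have hk := deg_pos hm (by simpa using hR)
    simp; omega
  omega

end comb
end QH

set_option linter.unusedSectionVars false
namespace QH
open Configuration Finset
open scoped Classical

section comb
variable {P L : Type} [Membership P L] [Fintype P] [Fintype L] [ProjectivePlane P L]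
variable {p q : ℕ} {C : Submodule (ZMod p) (P → ZMod p)}

lemma GoodSet.form {U : Finset P} (hU : GoodSet L p C U) (hp : 3 < p) (l : L) :
    ∃ k, sz U l = p * k + 1 := by
  have h := hU.mod l
  have h1 : 1 ≤ sz U l := by
    by_contra! h0
    have : sz U l = 0 := by omega
    rw [this, Nat.ModEq, Nat.zero_mod, Nat.mod_eq_of_lt (by omega)] at h
    omega
  obtain ⟨k, hk⟩ := (Nat.modEq_iff_dvd' h1).1 h.symm
  exact ⟨k, by omega⟩

lemma GoodCode.p5 (h : GoodCode P L p q C) : 5 ≤ p := by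
  have := h.gt3
  have h4 : p ≠ 4 := by rintro rfl; exact absurd h.prime (by norm_num)
  omega

lemma dichotomy (h : GoodCode P L p q C) {U : Finset P} (hU : GoodSet L p C U) {s : ℕ}
    (hs : s + p ≤ q ^ 2 + 1) (hc : U.card ≤ q ^ 3 + s) (m : L) :
    sz U m ≤ q + 1 ∨ q ^ 2 + 1 ≤ sz U m + q := by
  have hp := h.p5
  have hq := h.qp
  by_contra! hcon
  obtain ⟨h1, h2⟩ := hcon
  obtain ⟨k, hk⟩ := hU.form h.gt3 m
  have hb := size_bound h hU m (by omega)
  rw [hk] at h1 h2 hb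
  have h3 : p + 1 ≤ k := by
    by_contra! hh
    have : p * k ≤ p * p := Nat.mul_le_mul_left _ (by omega)
    nlinarith
  have h4 : k + p + 1 ≤ p ^ 3 := by
    by_contra! hh
    have : p * (p^3) ≤ p * (k + p) := Nat.mul_le_mul_left _ (by omega)
    rw [hq] at h2
    nlinarith
  have h3' : p * (p + 1) ≤ p * k := Nat.mul_le_mul_left _ h3
  have h4' : p * (k + p + 1) ≤ p * p ^ 3 := Nat.mul_le_mul_left _ h4
  obtain ⟨a, ha⟩ : ∃ a, p * k = q + p + a := Nat.exists_eq_add_of_le (by rw [hq]; nlinarith)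
  obtain ⟨b, hb'⟩ : ∃ b, q ^ 2 = p * k + q + p + b :=
    Nat.exists_eq_add_of_le (by rw [hq]; nlinarith)
  have hpq : p ≤ q := by rw [hq]; nlinarith
  have hf : (q + p + 1 + a) * (q + p + 1 + b) ≤ U.card := by
    have : (p * k + 1) * (q ^ 2 + 2) = (q + p + 1 + a) * (q + p + 1 + b) + (p * k + 1) * (p * k + 1) := by
      rw [hb', ha]; ring
    omega
  have hab : q ^ 2 = 2 * q + 2 * p + a + b := by omega
  have hcu : q ^ 3 = q * (2 * q + 2 * p + a + b) := by rw [← hab]; ring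
  have h5 : 5 * q ^ 2 ≤ p * q ^ 2 := Nat.mul_le_mul_right _ hp
  have h6 : p * q ^ 2 = p * (2 * q + 2 * p + a + b) := by rw [← hab]
  have h7 : (q + p) * (q + p) ≤ (2 * q) * (2 * q) := Nat.mul_le_mul (by omega) (by omega)
  have h8 : 0 ≤ a * b := Nat.zero_le _
  nlinarith

lemma rest_singleton (U : Finset P) (l : L) : rest p U {l} = ind p U - lineInd p l := by
  simp [rest]

lemma card_long (h : GoodCode P L p q C) {U : Finset P} (hc : U.card ≤ q ^ 3 + q ^ 2)
    (A : Finset L) (hA : ∀ m ∈ A, q ^ 2 + 1 ≤ sz U m + q) : A.card ≤ q + 2 := by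
  by_contra! hcon
  obtain ⟨B, hBA, hB⟩ := exists_subset_card_eq (show q + 3 ≤ A.card by omega)
  have h1 := card_ge_of_lines U B
  have h2 : ∑ l ∈ B, ((q : ℤ) ^ 2 + 1 - q) ≤ ∑ l ∈ B, (sz U l : ℤ) := by
    refine sum_le_sum fun l hl => ?_
    have := hA l (hBA hl)
    zify at this
    linarith
  rw [sum_const, hB, nsmul_eq_mul] at h2
  rw [hB] at h1
  zify at hc
  have hq : (25 : ℤ) ≤ q := by exact_mod_cast h.q25
  push_cast at *
  nlinarith

lemma rest_zero_of_long (h : GoodCode P L p q C) {U : Finset P} (hU : GoodSet L p C U)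
    (hc : U.card ≤ q ^ 3 + q ^ 2) (A : Finset L) (hA : ∀ m ∈ A, q ^ 2 + 1 ≤ sz U m + q)
    (hA' : ∀ m ∉ A, sz U m ≤ q + 1) (h2 : 2 ≤ A.card) : rest p U A = 0 := by
  have hq := h.q25
  have hcl := card_long h hc A hA
  refine eq_zero_of_small h (rest_mem h hU A) (fun m => ?_) ?_
  · by_cases hm : m ∈ A
    · have h3 := sz_supp_rest_mem (p := p) U A hm
      have h4 := sz_compl U m
      rw [h.ord] at h4
      have := hA m hm
      nlinarith
    · have h3 := sz_supp_rest_notMem (p := p) U A hm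
      have := hA' m hm
      nlinarith
  · have h1 := card_supp_rest (p := p) U A
    have e1 : ∑ l ∈ A, ((q : ℤ) ^ 2 + 1 - q) ≤ ∑ l ∈ A, (sz U l : ℤ) := by
      refine sum_le_sum fun l hl => ?_
      have := hA l hl
      zify at this
      linarith
    have e2 : ∑ l ∈ A, (sz Uᶜ l : ℤ) ≤ ∑ l ∈ A, (q : ℤ) := by
      refine sum_le_sum fun l hl => ?_
      have := hA l hl
      have h4 := sz_compl U l
      rw [h.ord] at h4
      zify at this h4
      linarith
    rw [sum_const, nsmul_eq_mul] at e1 e2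
    zify at *
    nlinarith [mul_nonneg (sub_nonneg.2 h2) (show (0 : ℤ) ≤ q ^ 2 - 2 * q - A.card by nlinarith)]

lemma long_line (h : GoodCode P L p q C) {U : Finset P} (hU : GoodSet L p C U) (l : L)
    (hl : sz U l ≤ q ^ 2) (hc : U.card ≤ q ^ 3 + sz U l) :
    sz U l ≤ q + 1 ∨ sz U l + p = q ^ 2 + 1 := by
  have := Fact.mk h.prime
  have hq := h.q25
  have hp := h.p5
  have hqp := h.qp
  obtain ⟨ks, hks⟩ := hU.form h.gt3 l
  have hQ : q ^ 2 = p * p ^ 3 := by rw [hqp]; ring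
  have hksp : ks < p ^ 3 := by
    by_contra! hh
    have := Nat.mul_le_mul_left p hh
    omega
  obtain ⟨k, hk⟩ := Nat.exists_eq_add_of_lt hksp
  have hsk : sz U l + p * (k + 1) = q ^ 2 + 1 := by rw [hQ, hk, hks]; ring
  by_contra! hcon
  obtain ⟨c1, c2⟩ := hcon
  have hk1 : 1 ≤ k := by
    by_contra! h0
    apply c2
    have : k = 0 := by omega
    rw [this] at hsk
    omega
  have hhp : 2 * p ≤ p * (k + 1) := by nlinarith
  have hdic := dichotomy h hU (s := sz U l) (by omega) hc
  have hlong : q ^ 2 + 1 ≤ sz U l + q := (hdic l).resolve_left (by omega)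
  have hc' : U.card ≤ q ^ 3 + q ^ 2 := by omega
  set A : Finset L := univ.filter (fun m => q ^ 2 + 1 ≤ sz U m + q) with hAdef
  have hA : ∀ m ∈ A, q ^ 2 + 1 ≤ sz U m + q := fun m hm => (mem_filter.1 hm).2
  have hA' : ∀ m ∉ A, sz U m ≤ q + 1 := fun m hm =>
    (hdic m).resolve_right (fun hh => hm (mem_filter.2 ⟨mem_univ _, hh⟩))
  have hlA : l ∈ A := mem_filter.2 ⟨mem_univ _, hlong⟩
  have hcomp := sz_compl U l
  rw [h.ord] at hcomp
  have hcomp' : sz Uᶜ l = p * (k + 1) := by omega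
  rcases Nat.lt_or_ge A.card 2 with hA2 | hA2
  · have hAl : ∀ m ∈ A, m = l := fun m hm => (card_le_one.1 (by omega)) m hm l hlA
    have hpos : 0 < sz Uᶜ l := by omega
    rw [sz, card_pos] at hpos
    obtain ⟨R, hR⟩ := hpos
    rw [mem_filter, mem_compl] at hR
    have hcR : rest p U {l} R ≠ 0 := by
      simp [rest_singleton, ind, lineInd, hR]
    have hw : ∀ m : L, 2 * sz (supp (rest p U {l})) m < q ^ 2 := by
      intro m
      by_cases hm : m = l
      · have h3 := sz_supp_rest_mem (p := p) U {l} (mem_singleton.2 hm)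
        rw [card_singleton, hm] at h3
        rw [hm]
        nlinarith
      · have h3 := sz_supp_rest_notMem (p := p) U {l} (m := m) (by simpa using hm)
        rw [card_singleton] at h3
        have := hA' m (fun hh => hm (hAl m hh))
        nlinarith
    obtain ⟨m, hRm, hm⟩ := exists_big h (rest_mem h hU {l}) hcR (fun m _ => hw m)
    have hml : m ≠ l := by
      intro hml
      have h3 := sz_supp_rest_mem (p := p) U {l} (mem_singleton.2 hml)
      rw [card_singleton, hml] at h3
      rw [hml] at hm
      omega
    have h3 := sz_supp_rest_notMem (p := p) U {l} (m := m) (by simpa using hml)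
    rw [card_singleton] at h3
    have h4 := hA' m (fun hh => hml (hAl m hh))
    obtain ⟨k', hk'⟩ := hU.form h.gt3 m
    have h5 : sz U m = q + 1 := by
      have : p ≤ k' := by
        by_contra! hh
        have : p * (k' + 1) ≤ p * p := Nat.mul_le_mul_left _ hh
        nlinarith
      have : p * p ≤ p * k' := Nat.mul_le_mul_left _ this
      nlinarith
    have h6 : sz U m + 1 ≤ sz (supp (rest p U {l})) m := by
      have hn : R ∉ U.filter (fun T => T ∈ m) := fun hh => hR.1 (mem_filter.1 hh).1
      rw [sz, ← card_insert_of_notMem hn]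
      refine card_le_card fun T hT => ?_
      rw [mem_insert] at hT
      rcases hT with rfl | hT
      · exact mem_filter.2 ⟨(mem_supp _ _).2 hcR, hRm⟩
      · rw [mem_filter] at hT
        refine mem_filter.2 ⟨(mem_supp _ _).2 ?_, hT.2⟩
        have hTl : T ∉ l := by
          intro hTl
          have hTR : T ≠ R := fun hh => hR.1 (hh ▸ hT.1)
          exact hml ((Nondegenerate.eq_or_eq hT.2 hRm hTl hR.2).resolve_left hTR)
        simp [rest_singleton, ind, lineInd, hT.1, hTl]
    have h7 : sz (supp (rest p U {l})) m = q + 2 := by omega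
    have hb := h.bound _ (rest_mem h hU {l}) m (hw m)
    have hcs := card_supp_sub h U l
    rw [h7] at hb
    rw [← rest_singleton] at hcs
    have : (supp (rest p U {l})).card ≤ q ^ 3 + q := by omega
    nlinarith
  · have hz := rest_zero_of_long h hU hc' A hA hA' hA2
    have hcl := card_long h hc' A hA
    have hsd := sum_deg_sub (P := P) A hlA
    have h1 : ∑ R ∈ univ.filter (fun R : P => R ∈ l), (if R ∈ Uᶜ then (p - 1) else 0)
        ≤ ∑ R ∈ univ.filter (fun R : P => R ∈ l), (deg A R - 1) := by
      refine sum_le_sum fun R hR => ?_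
      split_ifs with hRU
      · rw [mem_compl] at hRU
        have h0 : rest p U A R = 0 := by rw [hz]; rfl
        rw [rest_apply, if_neg hRU, zero_sub, neg_eq_zero, ZMod.natCast_eq_zero_iff] at h0
        have := Nat.le_of_dvd (deg_pos hlA (mem_filter.1 hR).2) h0
        omega
      · exact Nat.zero_le _
    have h2 : ∑ R ∈ univ.filter (fun R : P => R ∈ l), (if R ∈ Uᶜ then (p - 1) else 0)
        = sz Uᶜ l * (p - 1) := by
      rw [sz_eq_sum, sum_mul]
      refine sum_congr rfl fun R _ => ?_
      split_ifs <;> simp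
    have h3 : 2 * p * (p - 1) ≤ sz Uᶜ l * (p - 1) := Nat.mul_le_mul_right _ (by omega)
    have h4 : 2 * p * (p - 1) ≤ p ^ 2 + 1 := by omega
    obtain ⟨p', hp'⟩ : ∃ p', p = p' + 1 := ⟨p - 1, by omega⟩
    clear * - h4 hp' hp
    subst hp'
    rw [Nat.add_sub_cancel] at h4
    nlinarith

end comb
end QH

set_option linter.unusedSectionVars false
namespace QH
open Configuration Finset
open scoped Classical

section comb
variable {P L : Type} [Membership P L] [Fintype P] [Fintype L] [ProjectivePlane P L]
variable {p q : ℕ} {C : Submodule (ZMod p) (P → ZMod p)}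

lemma mem_of_full (h : GoodCode P L p q C) {U : Finset P} {l : L} (hl : sz U l = q ^ 2 + 1)
    {R : P} (hR : R ∈ l) : R ∈ U := by
  by_contra hU
  have h1 := sz_compl U l
  rw [h.ord] at h1
  have h2 : 0 < sz Uᶜ l := card_pos.2 ⟨R, mem_filter.2 ⟨mem_compl.2 hU, hR⟩⟩
  omega

lemma pencil (h : GoodCode P L p q C) {U : Finset P} (hU : GoodSet L p C U)
    (hall : ∀ m : L, sz U m ≤ q + 1 ∨ sz U m = q ^ 2 + 1) (R0 : P) (hR0 : R0 ∉ U)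
    (A : Finset L) (hA : ∀ m, m ∈ A ↔ sz U m = q ^ 2 + 1) (hne : A.Nonempty) :
    A.card ≤ q + 1 ∧ (∃ R : P, ∀ l ∈ A, R ∈ l) ∧ ∀ T, T ∈ U ↔ ∃ l ∈ A, T ∈ l := by
  have := Fact.mk h.prime
  have hq := h.q25
  have hp := h.p5
  have hqp := h.qp
  have hA' : ∀ m ∉ A, sz U m ≤ q + 1 := fun m hm =>
    (hall m).resolve_right (fun hh => hm ((hA m).2 hh))
  have hcard : U.card ≤ (q + 1) * (q ^ 2 + 1) := by
    have h1 := sum_sz_through (L := L) U R0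
    rw [if_neg hR0, add_zero] at h1
    rw [← h1]
    refine (sum_le_card_nsmul _ _ (q + 1) fun l hl => ?_).trans ?_
    · refine (hall l).resolve_right fun hh => hR0 (mem_of_full h hh (mem_filter.1 hl).2)
    · rw [card_lines_through, h.ord, smul_eq_mul, mul_comm]
  have hAc : A.card ≤ q + 1 := by
    by_contra! hcon
    obtain ⟨B, hBA, hB⟩ := exists_subset_card_eq (show q + 2 ≤ A.card by omega)
    have h1 := card_ge_of_lines U B
    have h2 : ∑ l ∈ B, (sz U l : ℤ) = ∑ l ∈ B, ((q : ℤ) ^ 2 + 1) := by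
      refine sum_congr rfl fun l hl => ?_
      have := (hA l).1 (hBA hl)
      rw [this]; push_cast; ring
    rw [sum_const, hB, nsmul_eq_mul] at h2
    rw [hB, h2] at h1
    zify at hcard hq
    push_cast at *
    nlinarith
  have hcompl : ∀ l ∈ A, sz Uᶜ l = 0 := fun l hl => by
    have h1 := sz_compl U l
    rw [h.ord, (hA l).1 hl] at h1
    omega
  have hz : rest p U A = 0 := by
    rcases Nat.lt_or_ge A.card 2 with hA2 | hA2
    · obtain ⟨l, hl⟩ := hne
      have hAl : A = {l} := by
        rw [eq_singleton_iff_unique_mem]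
        exact ⟨hl, fun m hm => (card_le_one.1 (by omega)) m hm l hl⟩
      have hw : ∀ m : L, sz (supp (rest p U A)) m ≤ q := by
        intro m
        by_cases hm : m ∈ A
        · have h3 := sz_supp_rest_mem (p := p) U A hm
          rw [hcompl m hm] at h3
          omega
        · have hml : m ≠ l := fun hh => hm (hh ▸ hl)
          obtain ⟨T, ⟨hTm, hTl⟩, -⟩ := HasPoints.existsUnique_point P L m l hml
          have hTU : T ∈ U := mem_of_full h ((hA l).1 hl) hTl
          have hTU' : T ∈ U.filter (fun R => R ∈ m) := mem_filter.2 ⟨hTU, hTm⟩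
          have h4 : sz (supp (rest p U A)) m ≤ ((U.filter (fun R => R ∈ m)).erase T).card := by
            refine card_le_card fun R hR => ?_
            rw [mem_filter, mem_supp, hAl, rest_singleton] at hR
            have hRT : R ≠ T := by
              rintro rfl
              apply hR.1
              simp [ind, lineInd, hTU, hTl]
            refine mem_erase.2 ⟨hRT, mem_filter.2 ⟨?_, hR.2⟩⟩
            by_contra hRU
            have hRl : R ∉ l := fun hh => hRU (mem_of_full h ((hA l).1 hl) hh)
            apply hR.1
            simp [ind, lineInd, hRU, hRl]
          rw [card_erase_of_mem hTU'] at h4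
          have := hA' m hm
          rw [sz] at this
          omega
      funext R
      by_contra hR
      obtain ⟨m, hRm, hm⟩ := exists_big h (rest_mem h hU A) hR
        (fun m _ => by have := hw m; nlinarith)
      have := hw m
      omega
    · refine eq_zero_of_small h (rest_mem h hU A) (fun m => ?_) ?_
      · by_cases hm : m ∈ A
        · have h3 := sz_supp_rest_mem (p := p) U A hm
          rw [hcompl m hm] at h3
          nlinarith
        · have h3 := sz_supp_rest_notMem (p := p) U A hm
          have := hA' m hm
          nlinarith
      · have h1 := card_supp_rest (p := p) U A
        have e1 : ∑ l ∈ A, (sz U l : ℤ) = ∑ l ∈ A, ((q : ℤ) ^ 2 + 1) := by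
          refine sum_congr rfl fun l hl => ?_
          have := (hA l).1 hl
          rw [this]; push_cast; ring
        have e2 : ∑ l ∈ A, (sz Uᶜ l : ℤ) = 0 :=
          sum_eq_zero fun l hl => by rw [hcompl l hl]; rfl
        rw [sum_const, nsmul_eq_mul] at e1
        rw [e1, e2] at h1
        zify at *
        nlinarith [mul_nonneg (sub_nonneg.2 hA2) (show (0 : ℤ) ≤ q ^ 2 - A.card by nlinarith)]
  have hdeg : ∀ T ∈ U, (deg A T : ZMod p) = 1 := by
    intro T hT
    have h0 : rest p U A T = 0 := by rw [hz]; rfl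
    rw [rest_apply, if_pos hT, sub_eq_zero] at h0
    exact h0.symm
  have hdeg2 : ∀ T ∈ U, 2 ≤ deg A T → p + 1 ≤ deg A T := by
    intro T hT h2
    have h1 : ((1 : ℕ) : ZMod p) = (deg A T : ZMod p) := by rw [hdeg T hT]; simp
    rw [ZMod.natCast_eq_natCast_iff, Nat.modEq_iff_dvd' (by omega)] at h1
    have := Nat.le_of_dvd (by omega) h1
    omega
  have two : ∀ l ∈ A, ∀ m ∈ A, l ≠ m → ∀ T, T ∈ l → T ∈ m → p + 1 ≤ deg A T := by
    intro l hl m hm hlm T hTl hTm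
    refine hdeg2 T (mem_of_full h ((hA l).1 hl) hTl) ?_
    have h1 : 1 < deg A T :=
      one_lt_card.2 ⟨l, mem_filter.2 ⟨hl, hTl⟩, m, mem_filter.2 ⟨hm, hTm⟩, hlm⟩
    omega
  refine ⟨hAc, ?_, fun T => ⟨fun hT => ?_, fun ⟨l, hl, hT⟩ => mem_of_full h ((hA l).1 hl) hT⟩⟩
  · rcases Nat.lt_or_ge A.card 2 with hA2 | hA2
    · obtain ⟨l, hl⟩ := hne
      have h1 : 0 < sz U l := by rw [(hA l).1 hl]; omega
      rw [sz, card_pos] at h1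
      obtain ⟨R, hR⟩ := h1
      refine ⟨R, fun m hm => ?_⟩
      rw [(card_le_one.1 (by omega)) m hm l hl]
      exact (mem_filter.1 hR).2
    · obtain ⟨l1, h1, l2, h2, h12⟩ := one_lt_card.1 hA2
      obtain ⟨R, ⟨hR1, hR2⟩, -⟩ := HasPoints.existsUnique_point P L l1 l2 h12
      refine ⟨R, fun l0 hl0 => ?_⟩
      by_contra hRl
      have hd := two l1 h1 l2 h2 h12 R hR1 hR2
      have hex : ∀ l : L, ∃ T : P, R ∈ l → T ∈ l ∧ T ∈ l0 := by
        intro l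
        by_cases hl : R ∈ l
        · have : l ≠ l0 := fun hh => hRl (hh ▸ hl)
          obtain ⟨T, hT, -⟩ := HasPoints.existsUnique_point P L l l0 this
          exact ⟨T, fun _ => hT⟩
        · exact ⟨R, fun hh => absurd hh hl⟩
      choose f hf using hex
      have hcard2 : deg A R ≤
          ((univ.filter (fun T : P => T ∈ l0)).filter (fun T => p + 1 ≤ deg A T)).card := by
        refine card_le_card_of_injOn f (fun l hl => ?_) (fun l hl m hm hlm => ?_)
        · rw [mem_coe, mem_filter] at hl
          have := hf l hl.2
          rw [mem_coe, mem_filter, mem_filter]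
          refine ⟨⟨mem_univ _, this.2⟩, two l hl.1 l0 hl0 ?_ _ this.1 this.2⟩
          rintro rfl; exact hRl hl.2
        · rw [mem_coe, mem_filter] at hl hm
          have a1 := hf l hl.2
          have a2 := hf m hm.2
          rw [← hlm] at a2
          have hne : f l ≠ R := fun hh => hRl (hh ▸ a1.2)
          exact (Nondegenerate.eq_or_eq a1.1 hl.2 a2.1 hm.2).resolve_left hne
      have hsd := sum_deg_sub (P := P) A hl0
      have hle : ∑ T ∈ (univ.filter (fun T : P => T ∈ l0)).filter (fun T => p + 1 ≤ deg A T),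
          (deg A T - 1) ≤ ∑ T ∈ univ.filter (fun T : P => T ∈ l0), (deg A T - 1) :=
        sum_le_sum_of_subset (filter_subset _ _)
      have hge := card_nsmul_le_sum
        ((univ.filter (fun T : P => T ∈ l0)).filter (fun T => p + 1 ≤ deg A T))
        (fun T => deg A T - 1) p (fun T hT => by
          have := (mem_filter.1 hT).2
          omega)
      rw [smul_eq_mul] at hge
      have : (p + 1) * p ≤ q := by
        refine (Nat.mul_le_mul_right p (hd.trans hcard2)).trans ?_
        omega
      nlinarith
  · have h1 := hdeg T hT
    have h2 : deg A T ≠ 0 := by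
      intro h0; rw [h0] at h1; simp at h1
    rw [deg, ← Nat.pos_iff_ne_zero, card_pos] at h2
    obtain ⟨l, hl⟩ := h2
    exact ⟨l, (mem_filter.1 hl).1, (mem_filter.1 hl).2⟩

/-- A set of unital type. -/
structure Unital (L : Type) [Membership P L] [Fintype L] (q : ℕ) (U : Finset P) : Prop where
  card : U.card = q ^ 3 + 1
  two : ∀ m : L, sz U m = 1 ∨ sz U m = q + 1
  tan_in : ∀ R ∈ U, (univ.filter (fun l : L => R ∈ l ∧ sz U l = 1)).card = 1
  tan_out : ∀ R ∉ U, (univ.filter (fun l : L => R ∈ l ∧ sz U l = 1)).card = q + 1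

lemma unital (h : GoodCode P L p q C) {U : Finset P} (hU : GoodSet L p C U)
    (hall : ∀ m : L, sz U m ≤ q + 1) : Unital L q U := by
  have := Fact.mk h.prime
  have hq := h.q25
  have hp := h.p5
  have hge1 : ∀ m : L, 1 ≤ sz U m := fun m => by
    obtain ⟨k, hk⟩ := hU.form h.gt3 m
    omega
  have hUne : ∃ R, R ∈ U := by
    have hL : 0 < Fintype.card L := by
      rw [ProjectivePlane.card_lines P L]; omega
    obtain ⟨m⟩ := Fintype.card_pos_iff.1 hL
    obtain ⟨R, hR⟩ := card_pos.1 (hge1 m)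
    exact ⟨R, (mem_filter.1 hR).1⟩
  obtain ⟨R, hR⟩ := hUne
  have hlow : q ^ 3 + 1 ≤ U.card := by
    obtain ⟨l, hl, hb⟩ := exists_big h hU.mem (R := R) (by simp [ind, hR]) (fun l _ => by
      rw [supp_ind]; have := hall l; nlinarith)
    rw [supp_ind] at hb
    have e : sz U l = q + 1 := le_antisymm (hall l) hb
    have := size_bound h hU l (by rw [e]; nlinarith)
    rw [e] at this
    nlinarith
  have hup : U.card ≤ q ^ 3 + q + 1 := by
    have h1 := sum_sz_through (L := L) U R
    rw [if_pos hR, h.ord] at h1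
    have h2 := sum_le_card_nsmul (univ.filter (fun l : L => R ∈ l)) (fun l => sz U l) (q + 1)
      (fun l _ => hall l)
    rw [h1, card_lines_through, h.ord, smul_eq_mul] at h2
    nlinarith
  have hs1 := sum_sz (L := L) U
  have hs2 := sum_sz_sq (L := L) U
  have hL := ProjectivePlane.card_lines P L
  rw [h.ord] at hs1 hs2 hL
  have key : ∑ l : L, ((q : ℤ) + 1 - sz U l) * (sz U l - 1)
      = (q + 2) * (U.card * (q ^ 2 + 1)) - U.card * (U.card + q ^ 2)
        - (q + 1) * ((q ^ 2) ^ 2 + q ^ 2 + 1) := by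
    have e : ∀ l : L, ((q : ℤ) + 1 - sz U l) * (sz U l - 1)
        = (q + 2) * sz U l - sz U l * sz U l - (q + 1) := fun l => by ring
    zify at hs1 hs2 hL
    simp_rw [e]
    rw [sum_sub_distrib, sum_sub_distrib, ← mul_sum, hs1, hs2, sum_const, card_univ,
      nsmul_eq_mul, hL]
    ring
  have hnn : ∀ l ∈ (univ : Finset L), 0 ≤ ((q : ℤ) + 1 - sz U l) * (sz U l - 1) := by
    intro l _
    have h1 := hge1 l
    have h2 := hall l
    zify at h1 h2
    exact mul_nonneg (by linarith) (by linarith)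
  have hsum := sum_nonneg hnn
  obtain ⟨e, he⟩ := Nat.exists_eq_add_of_le hlow
  have he0 : e = 0 := by
    by_contra h0
    have h1 : (1 : ℤ) ≤ e := by exact_mod_cast Nat.one_le_iff_ne_zero.2 h0
    rw [key, he] at hsum
    push_cast at hsum
    have h2 : (e : ℤ) * (q ^ 3 - q ^ 2 - q + e) ≤ 0 := by nlinarith
    have hq' : (25 : ℤ) ≤ q := by exact_mod_cast hq
    have h3 : 0 < (q : ℤ) ^ 3 - q ^ 2 - q + e := by nlinarith [sq_nonneg (q : ℤ)]
    nlinarith [mul_pos (show (0 : ℤ) < e by linarith) h3]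
  have hcard : U.card = q ^ 3 + 1 := by omega
  have htwo : ∀ m : L, sz U m = 1 ∨ sz U m = q + 1 := by
    have h0 : ∑ l : L, ((q : ℤ) + 1 - sz U l) * (sz U l - 1) = 0 := by
      rw [key, hcard]; push_cast; ring
    intro m
    have := (sum_eq_zero_iff_of_nonneg hnn).1 h0 m (mem_univ _)
    rcases mul_eq_zero.1 this with h1 | h1
    · right; zify; linarith
    · left; zify; linarith
  have hcount : ∀ T : P, (univ.filter (fun l : L => T ∈ l ∧ sz U l = 1)).card * q
      + (U.card + if T ∈ U then q ^ 2 else 0) = (q + 1) * (q ^ 2 + 1) := by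
    intro T
    have h1 := sum_sz_through (L := L) U T
    rw [h.ord] at h1
    rw [← h1, ← filter_filter, card_filter, sum_mul, ← sum_add_distrib]
    have h2 : ∀ l : L, (if sz U l = 1 then 1 else 0) * q + sz U l = q + 1 := by
      intro l
      split_ifs with hl
      · rw [hl]; ring
      · rw [(htwo l).resolve_left hl]; ring
    simp_rw [h2]
    rw [sum_const, card_lines_through, h.ord, smul_eq_mul, mul_comm]
  refine ⟨hcard, htwo, fun T hT => ?_, fun T hT => ?_⟩
  · have := hcount T
    rw [if_pos hT, hcard] at this
    have : (univ.filter (fun l : L => T ∈ l ∧ sz U l = 1)).card * q = 1 * q := by nlinarith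
    exact Nat.eq_of_mul_eq_mul_right (by omega) this
  · have := hcount T
    rw [if_neg hT, hcard] at this
    have : (univ.filter (fun l : L => T ∈ l ∧ sz U l = 1)).card * q = (q + 1) * q := by nlinarith
    exact Nat.eq_of_mul_eq_mul_right (by omega) this

end comb
end QH

set_option linter.unusedSectionVars false
namespace QH
open scoped Classical

section poly
open Polynomial

lemma coeff_prod_le {F ι : Type*} [Field F] (s : Finset ι) (f : ι → F[X]) (n : ι → ℕ)
    (h : ∀ i ∈ s, (f i).natDegree ≤ n i) :
    (∏ i ∈ s, f i).natDegree ≤ ∑ i ∈ s, n i ∧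
    (∏ i ∈ s, f i).coeff (∑ i ∈ s, n i) = ∏ i ∈ s, (f i).coeff (n i) := by
  induction s using Finset.induction_on with
  | empty => simp
  | insert a s ha ih =>
    have ih := ih fun i hi => h i (Finset.mem_insert_of_mem hi)
    have h1 := h a (Finset.mem_insert_self _ _)
    rw [Finset.prod_insert ha, Finset.sum_insert ha, Finset.prod_insert ha]
    exact ⟨natDegree_mul_le_of_le h1 ih.1, by rw [coeff_mul_add_eq_of_natDegree_le h1 ih.1, ih.2]⟩

lemma det_deg {F : Type*} [Field F] {s : ℕ} (M : Matrix (Fin s) (Fin s) F[X])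
    (n : Fin s → ℕ) (h : ∀ i j, (M i j).natDegree ≤ n i + n j) :
    M.det.natDegree ≤ 2 * ∑ i, n i ∧
    M.det.coeff (2 * ∑ i, n i) = (Matrix.of fun i j => (M i j).coeff (n i + n j)).det := by
  have hs : ∀ σ : Equiv.Perm (Fin s), ∑ i, (n (σ i) + n i) = 2 * ∑ i, n i := by
    intro σ
    rw [Finset.sum_add_distrib, Equiv.sum_comp σ n, two_mul]
  have key := fun σ : Equiv.Perm (Fin s) =>
    coeff_prod_le Finset.univ (fun i => M (σ i) i) (fun i => n (σ i) + n i) (fun i _ => h _ _)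
  simp only [hs] at key
  constructor
  · rw [Matrix.det_apply']
    refine natDegree_sum_le_of_forall_le _ _ fun σ _ => ?_
    have h0 : ((Equiv.Perm.sign σ : ℤ) : F[X]).natDegree = 0 := natDegree_intCast _
    exact (natDegree_mul_le).trans (by rw [h0, zero_add]; exact (key σ).1)
  · rw [Matrix.det_apply, Matrix.det_apply, finsetSum_coeff]
    refine Finset.sum_congr rfl fun σ _ => ?_
    have : ∀ (u : ℤˣ) (g : F[X]) (k : ℕ), (u • g).coeff k = u • g.coeff k := by
      intro u g k
      rcases Int.units_eq_one_or u with rfl | rfl <;> simp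
    rw [this, (key σ).2]
    rfl

lemma pow_dvd_det {F : Type*} [Field F] {s : ℕ} (M : Matrix (Fin s) (Fin s) F[X]) (y : F)
    (r : ℕ) (h : (M.map (eval y)).rank ≤ r) : (X - C y) ^ (s - r) ∣ M.det := by
  obtain ⟨L, L', D, hD⟩ :=
    Matrix.Pivot.exists_list_transvec_mul_mul_list_transvec_eq_diagonal (M.map (eval y))
  set A := (L.map Matrix.TransvectionStruct.toMatrix).prod with hA
  set B := (L'.map Matrix.TransvectionStruct.toMatrix).prod with hB
  have hdA : A.det = 1 := Matrix.TransvectionStruct.det_toMatrix_prod L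
  have hdB : B.det = 1 := Matrix.TransvectionStruct.det_toMatrix_prod L'
  have hr : (Matrix.diagonal D).rank ≤ r := by
    rw [← hD, Matrix.rank_mul_eq_left_of_isUnit_det _ _ (by rw [hdB]; exact isUnit_one),
      Matrix.rank_mul_eq_right_of_isUnit_det _ _ (by rw [hdA]; exact isUnit_one)]
    exact h
  rw [Matrix.rank_diagonal] at hr
  set N := A.map C * M * B.map C with hN
  have hdN : N.det = M.det := by
    rw [hN, Matrix.det_mul, Matrix.det_mul]
    have e1 : (A.map C).det = 1 := by
      have := (C : F →+* F[X]).map_det A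
      rw [RingHom.mapMatrix_apply] at this
      rw [← this, hdA, map_one]
    have e2 : (B.map C).det = 1 := by
      have := (C : F →+* F[X]).map_det B
      rw [RingHom.mapMatrix_apply] at this
      rw [← this, hdB, map_one]
    rw [e1, e2]; simp
  have hNe : N.map (eval y) = Matrix.diagonal D := by
    have e : ∀ X : Matrix (Fin s) (Fin s) F[X], X.map (eval y) = (evalRingHom y).mapMatrix X :=
      fun X => rfl
    rw [← hD, e, hN, map_mul, map_mul]
    congr 2
    · ext i j; simp
    · ext i j; simp
  have hcard : s - r ≤ (Finset.univ.filter (fun i => D i = 0)).card := by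
    have h1 := Finset.card_filter_add_card_filter_not (s := (Finset.univ : Finset (Fin s)))
      (fun i => D i = 0)
    rw [Finset.card_univ, Fintype.card_fin] at h1
    rw [Fintype.card_subtype] at hr
    have : (Finset.univ.filter (fun i => ¬ D i = 0)).card ≤ r := hr
    omega
  refine (pow_dvd_pow _ hcard).trans ?_
  rw [← hdN, Matrix.det_apply]
  refine Finset.dvd_sum fun σ _ => ?_
  have h1 : (X - C y) ^ (Finset.univ.filter (fun i => D i = 0)).card ∣ ∏ i, N (σ i) i := by
    rw [← Finset.prod_const, Finset.prod_filter]
    refine Finset.prod_dvd_prod_of_dvd _ _ fun i _ => ?_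
    split_ifs with hi
    · rw [dvd_iff_isRoot, IsRoot]
      have := congrFun (congrFun hNe (σ i)) i
      rw [Matrix.map_apply] at this
      rw [this, Matrix.diagonal_apply]
      split_ifs with hh
      · rw [hh, hi]
      · rfl
    · exact one_dvd _
  rcases Int.units_eq_one_or (Equiv.Perm.sign σ) with hh | hh <;> rw [hh]
  · simpa using h1
  · simpa using h1

lemma hankel_rank {F : Type*} [Field F] [Fintype F] (a : F → F) (s : ℕ) :
    (Matrix.of fun i j : Fin s => ∑ x, a x * x ^ ((i : ℕ) + j)).rank
      ≤ (Finset.univ.filter (fun x => a x ≠ 0)).card := by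
  set T := Finset.univ.filter (fun x => a x ≠ 0) with hT
  let V : Matrix T (Fin s) F := Matrix.of fun x j => (x : F) ^ (j : ℕ)
  let V' : Matrix T (Fin s) F := Matrix.of fun x j => a x * (x : F) ^ (j : ℕ)
  have e : (Matrix.of fun i j : Fin s => ∑ x, a x * x ^ ((i : ℕ) + j)) = V.transpose * V' := by
    ext i j
    rw [Matrix.mul_apply, Matrix.of_apply]
    have : ∑ x, a x * x ^ ((i : ℕ) + j) = ∑ x ∈ T, a x * x ^ ((i : ℕ) + j) := by
      symm
      refine Finset.sum_subset (Finset.subset_univ _) fun x _ hx => ?_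
      have : a x = 0 := by
        by_contra h0; exact hx (Finset.mem_filter.2 ⟨Finset.mem_univ _, h0⟩)
      rw [this, zero_mul]
    rw [this, ← Finset.sum_coe_sort]
    refine Finset.sum_congr rfl fun x _ => ?_
    simp only [V, V', Matrix.transpose_apply, Matrix.of_apply]
    ring
  rw [e]
  refine (Matrix.rank_mul_le_left _ _).trans ((Matrix.rank_le_card_width _).trans ?_)
  simp

lemma hankel_det {F : Type*} [Field F] [Fintype F] (a : F → F) (s : ℕ)
    (hs : (Finset.univ.filter (fun x => a x ≠ 0)).card = s) :
    (Matrix.of fun i j : Fin s => ∑ x, a x * x ^ ((i : ℕ) + j)).det ≠ 0 := by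
  set T := Finset.univ.filter (fun x => a x ≠ 0) with hT
  let g : Fin s ≃ T := (T.equivFinOfCardEq hs).symm
  let V : Matrix (Fin s) (Fin s) F := Matrix.vandermonde fun k => (g k : F)
  have e : (Matrix.of fun i j : Fin s => ∑ x, a x * x ^ ((i : ℕ) + j))
      = V.transpose * (Matrix.diagonal fun k => a (g k)) * V := by
    ext i j
    rw [Matrix.mul_apply, Matrix.of_apply]
    have : ∑ x, a x * x ^ ((i : ℕ) + j) = ∑ x ∈ T, a x * x ^ ((i : ℕ) + j) := by
      symm
      refine Finset.sum_subset (Finset.subset_univ _) fun x _ hx => ?_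
      have : a x = 0 := by
        by_contra h0; exact hx (Finset.mem_filter.2 ⟨Finset.mem_univ _, h0⟩)
      rw [this, zero_mul]
    rw [this, ← Finset.sum_coe_sort, ← Equiv.sum_comp g]
    refine Finset.sum_congr rfl fun x _ => ?_
    rw [Matrix.mul_diagonal]
    simp only [V, Matrix.transpose_apply, Matrix.vandermonde_apply]
    ring
  have hV : V.det ≠ 0 := by
    rw [Matrix.det_vandermonde_ne_zero_iff]
    exact Subtype.val_injective.comp g.injective
  rw [e, Matrix.det_mul, Matrix.det_mul, Matrix.det_transpose, Matrix.det_diagonal]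
  refine mul_ne_zero (mul_ne_zero hV ?_) hV
  rw [Finset.prod_ne_zero_iff]
  intro k _
  exact (Finset.mem_filter.1 (g k).2).2

lemma hankel {F : Type*} [Field F] [Fintype F] (a : F → F) (b : F → F → F) (s : ℕ)
    (hs : (Finset.univ.filter (fun x => a x ≠ 0)).card = s)
    (hf : ∀ k < 2 * s, ∃ f : F[X], f.natDegree ≤ k ∧ f.coeff k = ∑ x, a x * x ^ k ∧
      ∀ y, f.eval y = ∑ x, b y x * x ^ k) :
    s * Fintype.card F ≤ s * (s - 1)
      + ∑ y, (Finset.univ.filter (fun x => b y x ≠ 0)).card := by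
  have hf' : ∀ k : ℕ, ∃ f : F[X], k < 2 * s → (f.natDegree ≤ k ∧ f.coeff k = ∑ x, a x * x ^ k ∧
      ∀ y, f.eval y = ∑ x, b y x * x ^ k) := by
    intro k
    by_cases hk : k < 2 * s
    · obtain ⟨f, h⟩ := hf k hk
      exact ⟨f, fun _ => h⟩
    · exact ⟨0, fun h => absurd h hk⟩
  choose f hf using hf'
  let M : Matrix (Fin s) (Fin s) F[X] := Matrix.of fun i j => f ((i : ℕ) + j)
  have hlt : ∀ i j : Fin s, (i : ℕ) + j < 2 * s := fun i j => by omega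
  obtain ⟨d1, d2⟩ := det_deg M (fun i => (i : ℕ)) (fun i j => (hf _ (hlt i j)).1)
  have hdet : M.det ≠ 0 := by
    intro h0
    rw [h0, coeff_zero] at d2
    refine hankel_det a s hs ?_
    rw [d2]
    congr 1
    ext i j
    exact (hf _ (hlt i j)).2.1.symm
  have hdvd : (∏ y : F, (X - C y) ^ (s - (Finset.univ.filter (fun x => b y x ≠ 0)).card))
      ∣ M.det := by
    refine Finset.prod_dvd_of_coprime (fun y _ z _ hyz => ?_) (fun y _ => ?_)
    · exact (pairwise_coprime_X_sub_C Function.injective_id hyz).pow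
    · refine pow_dvd_det M y _ ?_
      have : M.map (eval y) = Matrix.of fun i j : Fin s => ∑ x, b y x * x ^ ((i : ℕ) + j) := by
        ext i j
        exact (hf _ (hlt i j)).2.2 y
      rw [this]
      exact hankel_rank _ _
  have hdeg := natDegree_le_of_dvd hdvd hdet
  rw [natDegree_prod _ _ (fun y _ => pow_ne_zero _ (X_sub_C_ne_zero y))] at hdeg
  simp only [natDegree_pow, natDegree_X_sub_C, mul_one] at hdeg
  have hsum : 2 * ∑ i : Fin s, (i : ℕ) = s * (s - 1) := by
    rw [Fin.sum_univ_eq_sum_range (fun i => i), mul_comm, Finset.sum_range_id_mul_two]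
  have h1 : s * Fintype.card F = ∑ y : F, s := by
    rw [Finset.sum_const, Finset.card_univ, smul_eq_mul, mul_comm]
  rw [h1, ← hsum]
  calc ∑ y : F, s ≤ ∑ y : F, ((s - (Finset.univ.filter (fun x => b y x ≠ 0)).card)
        + (Finset.univ.filter (fun x => b y x ≠ 0)).card) :=
        Finset.sum_le_sum fun y _ => by omega
    _ ≤ _ := by
      rw [Finset.sum_add_distrib]
      exact Nat.add_le_add_right (hdeg.trans d1) _

end poly
end QH

set_option linter.unusedSectionVars false
namespace QH
open scoped Classical
open Matrix

section fn
variable {F : Type} [Field F] [Fintype F]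

/-- The span of the indicator functions of linear hyperplanes, on vectors. -/
def vcode (F : Type) [Field F] : Submodule F ((Fin 3 → F) → F) :=
  Submodule.span F (Set.range fun m : Fin 3 → F => fun v => if m ⬝ᵥ v = 0 then (1 : F) else 0)

/-- Span of `k`-th powers of linear forms. -/
def pws (F : Type) [Field F] (k : ℕ) : Submodule F ((Fin 3 → F) → F) :=
  Submodule.span F (Set.range fun m : Fin 3 → F => fun v => (m ⬝ᵥ v) ^ k)

/-- Power moments on lines through `e`. -/
noncomputable def mom (φ : (Fin 3 → F) → F) (e : Fin 3 → F) (k : ℕ) : (Fin 3 → F) → F :=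
  fun w => ∑ x : F, φ (x • e + w) * x ^ k

lemma mom_mem {φ : (Fin 3 → F) → F} (hφ : φ ∈ vcode F) (e : Fin 3 → F) {k : ℕ}
    (hk : k < Fintype.card F - 1) : mom φ e k ∈ pws F k := by
  induction hφ using Submodule.span_induction with
  | mem φ h =>
    obtain ⟨m, rfl⟩ := h
    by_cases hm : m ⬝ᵥ e = 0
    · have : mom (fun v => if m ⬝ᵥ v = 0 then (1 : F) else 0) e k = 0 := by
        funext w
        simp only [mom, dotProduct_add, dotProduct_smul, hm, smul_zero, zero_add]
        rw [← Finset.mul_sum, FiniteField.sum_pow_lt_card_sub_one _ _ hk, mul_zero]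
        rfl
      rw [this]
      exact Submodule.zero_mem _
    · refine Submodule.subset_span ⟨(-(m ⬝ᵥ e)⁻¹) • m, ?_⟩
      funext w
      simp only [mom, dotProduct_add, dotProduct_smul, smul_eq_mul, smul_dotProduct]
      rw [Finset.sum_eq_single (-(m ⬝ᵥ e)⁻¹ * (m ⬝ᵥ w))]
      · rw [if_pos (by field_simp; ring), one_mul]
      · intro x _ hx
        rw [if_neg, zero_mul]
        intro h0
        apply hx
        field_simp
        linear_combination h0
      · intro h; exact absurd (Finset.mem_univ _) h
  | zero =>
    have : mom (0 : (Fin 3 → F) → F) e k = 0 := by funext w; simp [mom]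
    rw [this]; exact Submodule.zero_mem _
  | add φ ψ _ _ h1 h2 =>
    have : mom (φ + ψ) e k = mom φ e k + mom ψ e k := by
      funext w; simp [mom, add_mul, Finset.sum_add_distrib]
    rw [this]; exact Submodule.add_mem _ h1 h2
  | smul a φ _ h1 =>
    have : mom (a • φ) e k = a • mom φ e k := by
      funext w; simp [mom, mul_assoc, Finset.mul_sum]
    rw [this]; exact Submodule.smul_mem _ a h1

lemma pws_poly {k : ℕ} {g : (Fin 3 → F) → F} (hg : g ∈ pws F k) (e1 e2 : Fin 3 → F) :
    ∃ f : Polynomial F, f.natDegree ≤ k ∧ f.coeff k = g e1 ∧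
      ∀ y, f.eval y = g (y • e1 + e2) := by
  induction hg using Submodule.span_induction with
  | mem g h =>
    obtain ⟨m, rfl⟩ := h
    obtain ⟨l, hl⟩ : ∃ l : Polynomial F,
        l = Polynomial.C (m ⬝ᵥ e1) * Polynomial.X + Polynomial.C (m ⬝ᵥ e2) := ⟨_, rfl⟩
    have hd : l.natDegree ≤ 1 := by rw [hl]; exact Polynomial.natDegree_linear_le
    refine ⟨l ^ k, ?_, ?_, fun y => ?_⟩
    · exact Polynomial.natDegree_pow_le_of_le k hd |>.trans (by simp)
    · have := Polynomial.coeff_pow_of_natDegree_le (m := k) hd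
      rw [mul_one] at this
      rw [this, hl, Polynomial.coeff_add, Polynomial.coeff_C_mul_X, Polynomial.coeff_C]
      rw [if_pos rfl, if_neg one_ne_zero, add_zero]
    · rw [hl]
      simp only [Polynomial.eval_pow, Polynomial.eval_add, Polynomial.eval_mul,
        Polynomial.eval_C, Polynomial.eval_X, dotProduct_add, dotProduct_smul, smul_eq_mul]
      ring
  | zero => exact ⟨0, by simp⟩
  | add φ ψ _ _ h1 h2 =>
    obtain ⟨f, a1, a2, a3⟩ := h1
    obtain ⟨f', b1, b2, b3⟩ := h2
    refine ⟨f + f', Polynomial.natDegree_add_le_of_degree_le a1 b1, ?_, fun y => ?_⟩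
    · simp [a2, b2]
    · simp [a3, b3]
  | smul a φ _ h1 =>
    obtain ⟨f, a1, a2, a3⟩ := h1
    refine ⟨a • f, (Polynomial.natDegree_smul_le a f).trans a1, ?_, fun y => ?_⟩
    · simp [a2]
    · simp [a3]

lemma pws_lin {g : (Fin 3 → F) → F} (hg : g ∈ pws F 1) : ∃ n : Fin 3 → F, ∀ w, g w = n ⬝ᵥ w := by
  induction hg using Submodule.span_induction with
  | mem g h =>
    obtain ⟨m, rfl⟩ := h
    exact ⟨m, fun w => by simp⟩
  | zero => exact ⟨0, by simp⟩
  | add φ ψ _ _ h1 h2 =>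
    obtain ⟨n, hn⟩ := h1
    obtain ⟨m, hm⟩ := h2
    exact ⟨n + m, fun w => by simp [hn, hm, add_dotProduct]⟩
  | smul a φ _ h1 =>
    obtain ⟨n, hn⟩ := h1
    exact ⟨a • n, fun w => by simp [hn, smul_dotProduct]⟩

/-- Sesquilinear forms. -/
def sesq (q : ℕ) (N : Matrix (Fin 3) (Fin 3) F) (v w : Fin 3 → F) : F :=
  ∑ i, ∑ j, v i * N i j * w j ^ q

lemma pws_sesq {p n q : ℕ} (hp : p.Prime) [CharP F p] (hq : q = p ^ n)
    {g : (Fin 3 → F) → F} (hg : g ∈ pws F (q + 1)) :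
    ∃ N : Matrix (Fin 3) (Fin 3) F, ∀ w, g w = sesq q N w w := by
  have : Fact p.Prime := ⟨hp⟩
  induction hg using Submodule.span_induction with
  | mem g h =>
    obtain ⟨m, rfl⟩ := h
    refine ⟨Matrix.of fun i j => m i * m j ^ q, fun w => ?_⟩
    have h1 : (m ⬝ᵥ w) ^ q = ∑ j, m j ^ q * w j ^ q := by
      rw [dotProduct, hq, sum_pow_char_pow]
      simp [mul_pow]
    simp only [sesq, of_apply]
    rw [pow_succ, h1, dotProduct, mul_comm, Finset.sum_mul]
    refine Finset.sum_congr rfl fun i _ => ?_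
    rw [Finset.mul_sum]
    refine Finset.sum_congr rfl fun j _ => ?_
    ring
  | zero => exact ⟨0, by simp [sesq]⟩
  | add φ ψ _ _ h1 h2 =>
    obtain ⟨n, hn⟩ := h1
    obtain ⟨m, hm⟩ := h2
    refine ⟨n + m, fun w => ?_⟩
    simp only [Pi.add_apply, hn, hm, sesq, Matrix.add_apply, mul_add, add_mul,
      Finset.sum_add_distrib]
  | smul a φ _ h1 =>
    obtain ⟨n, hn⟩ := h1
    refine ⟨a • n, fun w => ?_⟩
    simp only [Pi.smul_apply, hn, sesq, Matrix.smul_apply, smul_eq_mul, Finset.mul_sum]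
    refine Finset.sum_congr rfl fun i _ => Finset.sum_congr rfl fun j _ => ?_
    ring

/-- The weight bound on vector functions. -/
lemma vbound {φ : (Fin 3 → F) → F} (hφ : φ ∈ vcode F) (e0 e1 e2 : Fin 3 → F) (s : ℕ)
    (hs : (Finset.univ.filter (fun x : F => φ (x • e0 + e1) ≠ 0)).card = s)
    (h2 : 2 * s < Fintype.card F) :
    s * Fintype.card F ≤ s * (s - 1)
      + ∑ y : F, (Finset.univ.filter (fun x : F => φ (x • e0 + (y • e1 + e2)) ≠ 0)).card := by
  refine hankel (fun x => φ (x • e0 + e1)) (fun y x => φ (x • e0 + (y • e1 + e2))) s hs ?_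
  intro k hk
  exact pws_poly (mom_mem hφ e0 (by omega)) e1 e2

end fn
end QH

set_option linter.unusedSectionVars false
namespace QH
open scoped Classical LinearAlgebra.Projectivization
open Matrix Configuration

section plane
variable {F : Type} [Field F] [Fintype F]

/-- Points (and lines) of the projective plane over `F`. -/
abbrev PP (F : Type) [Field F] : Type := ℙ F (Fin 3 → F)

noncomputable instance instFintypePP : Fintype (PP F) := Fintype.ofFinite _

lemma ones_ne : (fun _ => 1 : Fin 3 → F) ≠ 0 := fun h => one_ne_zero (congrFun h 0)

/-- The projective point of a vector (junk value at zero). -/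
noncomputable def mkp (v : Fin 3 → F) : PP F :=
  if h : v ≠ 0 then Projectivization.mk F v h else Projectivization.mk F (fun _ => 1) ones_ne

lemma mkp_of (v : Fin 3 → F) (h : v ≠ 0) : mkp v = Projectivization.mk F v h := dif_pos h

lemma mkp_rep (R : PP F) : mkp R.rep = R := by
  rw [mkp_of _ R.rep_nonzero, Projectivization.mk_rep]

lemma mkp_eq {v w : Fin 3 → F} (hv : v ≠ 0) (hw : w ≠ 0) :
    mkp v = mkp w ↔ ∃ a : F, a • w = v := by
  rw [mkp_of v hv, mkp_of w hw, Projectivization.mk_eq_mk_iff']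

lemma mkp_smul {v : Fin 3 → F} {a : F} (ha : a ≠ 0) : mkp (a • v) = mkp v := by
  by_cases hv : v = 0
  · rw [hv, smul_zero]
  · exact (mkp_eq (smul_ne_zero ha hv) hv).2 ⟨a, rfl⟩

lemma mkp_mem {v m : Fin 3 → F} (hv : v ≠ 0) (hm : m ≠ 0) : mkp v ∈ mkp m ↔ m ⬝ᵥ v = 0 := by
  rw [mkp_of v hv, mkp_of m hm, ofField.mem_iff, Projectivization.orthogonal_mk, dotProduct_comm]

lemma mem_rep {v : Fin 3 → F} (hv : v ≠ 0) (l : PP F) : mkp v ∈ l ↔ l.rep ⬝ᵥ v = 0 := by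
  rw [← mkp_mem hv l.rep_nonzero, mkp_rep]

lemma mem_rep' (R l : PP F) : R ∈ l ↔ l.rep ⬝ᵥ R.rep = 0 := by
  rw [← mem_rep R.rep_nonzero, mkp_rep]

lemma order_eq : ProjectivePlane.order (PP F) (PP F) = Fintype.card F := by
  have h1 := ProjectivePlane.card_points (PP F) (PP F)
  have h2 := Projectivization.card_of_finrank F (Fin 3 → F) (n := 3) (by simp)
  rw [← Nat.card_eq_fintype_card, h2, Nat.card_eq_fintype_card] at h1
  simp only [Finset.sum_range_succ, Finset.sum_range_zero, pow_zero, pow_one] at h1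
  set n := ProjectivePlane.order (PP F) (PP F)
  set Q := Fintype.card F
  rcases lt_trichotomy n Q with h | h | h
  · nlinarith
  · exact h
  · nlinarith

/-- Independence of a pair, in concrete form. -/
def indep (e0 e1 : Fin 3 → F) : Prop := e0 ≠ 0 ∧ ∀ x : F, x • e0 + e1 ≠ 0

lemma indep_of_ne {e0 e1 : Fin 3 → F} (h0 : e0 ≠ 0) (h1 : e1 ≠ 0) (h : mkp e0 ≠ mkp e1) :
    indep e0 e1 := by
  refine ⟨h0, fun x hx => h ?_⟩
  rw [eq_comm, mkp_eq h1 h0]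
  exact ⟨-x, by rw [neg_smul, ← eq_neg_of_add_eq_zero_right hx]⟩

lemma indep.ne1 {e0 e1 : Fin 3 → F} (h : indep e0 e1) : e1 ≠ 0 := by
  have := h.2 0
  simpa using this

lemma indep.zero {e0 e1 : Fin 3 → F} (h : indep e0 e1) {a b : F} (hab : a • e0 + b • e1 = 0) :
    a = 0 ∧ b = 0 := by
  have hb : b = 0 := by
    by_contra hb
    apply h.2 (b⁻¹ * a)
    have : b⁻¹ • (a • e0 + b • e1) = 0 := by rw [hab, smul_zero]
    rwa [smul_add, smul_smul, smul_smul, inv_mul_cancel₀ hb, one_smul] at this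
  subst hb
  rw [zero_smul, add_zero, smul_eq_zero] at hab
  exact ⟨hab.resolve_right h.1, rfl⟩

lemma indep.ne {e0 e1 : Fin 3 → F} (h : indep e0 e1) : mkp e0 ≠ mkp e1 := by
  intro hh
  rw [eq_comm, mkp_eq h.ne1 h.1] at hh
  obtain ⟨a, ha⟩ := hh
  have := h.2 (-a)
  rw [neg_smul, ha, neg_add_cancel] at this
  exact this rfl

lemma mkp_inj {e0 e1 : Fin 3 → F} (h : indep e0 e1) :
    Function.Injective (fun x : F => mkp (x • e0 + e1)) := by
  intro x y hxy
  obtain ⟨a, ha⟩ := (mkp_eq (h.2 x) (h.2 y)).1 hxy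
  have h1 : (a * y - x) • e0 + (a - 1) • e1 = 0 := by
    rw [sub_smul, sub_smul, one_smul, mul_smul]
    rw [smul_add] at ha
    linear_combination (exp := 1) ha
  obtain ⟨h2, h3⟩ := h.zero h1
  have ha1 : a = 1 := by linear_combination h3
  rw [ha1] at h2
  linear_combination -h2

lemma mkp_notMem {e0 e1 : Fin 3 → F} (h : indep e0 e1) (x : F) : mkp (x • e0 + e1) ≠ mkp e0 := by
  intro hh
  obtain ⟨a, ha⟩ := (mkp_eq (h.2 x) h.1).1 hh
  have := h.2 (x - a)
  rw [sub_smul, ha] at this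
  apply this
  abel

lemma line_eq {e0 e1 : Fin 3 → F} (h : indep e0 e1) (l : PP F) (h0 : mkp e0 ∈ l)
    (h1 : mkp e1 ∈ l) : Finset.univ.filter (fun R : PP F => R ∈ l)
      = insert (mkp e0) (Finset.univ.image (fun x : F => mkp (x • e0 + e1))) := by
  symm
  refine Finset.eq_of_subset_of_card_le ?_ ?_
  · intro R hR
    rw [Finset.mem_filter]
    refine ⟨Finset.mem_univ _, ?_⟩
    rw [Finset.mem_insert, Finset.mem_image] at hR
    rcases hR with rfl | ⟨x, -, rfl⟩
    · exact h0
    · rw [mem_rep h.1] at h0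
      rw [mem_rep h.ne1] at h1
      rw [mem_rep (h.2 x), dotProduct_add, dotProduct_smul, h0, h1, smul_zero, add_zero]
  · rw [Finset.card_insert_of_notMem, Finset.card_image_of_injective _ (mkp_inj h),
      Finset.card_univ]
    · have := sz_univ (P := PP F) l
      rw [order_eq] at this
      rw [← this, sz]
    · rw [Finset.mem_image]
      rintro ⟨x, -, hx⟩
      exact mkp_notMem h x hx

lemma mem_line {e0 e1 : Fin 3 → F} (h : indep e0 e1) {l : PP F} (h0 : mkp e0 ∈ l)
    (h1 : mkp e1 ∈ l) {R : PP F} (hR : R ∈ l) (hne : R ≠ mkp e0) :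
    ∃ x : F, R = mkp (x • e0 + e1) := by
  have : R ∈ Finset.univ.filter (fun R : PP F => R ∈ l) :=
    Finset.mem_filter.2 ⟨Finset.mem_univ _, hR⟩
  rw [line_eq h l h0 h1, Finset.mem_insert, Finset.mem_image] at this
  rcases this with h1 | ⟨x, -, hx⟩
  · exact absurd h1 hne
  · exact ⟨x, hx.symm⟩

lemma sz_param {e0 e1 : Fin 3 → F} (h : indep e0 e1) (l : PP F) (h0 : mkp e0 ∈ l)
    (h1 : mkp e1 ∈ l) (S : Finset (PP F)) (hS : mkp e0 ∉ S) :
    sz S l = (Finset.univ.filter (fun x : F => mkp (x • e0 + e1) ∈ S)).card := by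
  rw [← Finset.card_image_of_injective _ (mkp_inj h), sz]
  congr 1
  ext R
  simp only [Finset.mem_filter, Finset.mem_image, Finset.mem_univ, true_and]
  constructor
  · rintro ⟨hR, hl⟩
    obtain ⟨x, hx⟩ := mem_line h h0 h1 hl (fun hh => hS (hh ▸ hR))
    exact ⟨x, hx ▸ hR, hx.symm⟩
  · rintro ⟨x, hx, rfl⟩
    refine ⟨hx, ?_⟩
    rw [mem_rep h.1] at h0
    rw [mem_rep h.ne1] at h1
    rw [mem_rep (h.2 x), dotProduct_add, dotProduct_smul, h0, h1, smul_zero, add_zero]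

/-- The code of the plane. -/
def pcode (p : ℕ) (F : Type) [Field F] : Submodule (ZMod p) (PP F → ZMod p) :=
  Submodule.span (ZMod p) (Set.range fun m : Fin 3 → F => fun R : PP F =>
    if m ⬝ᵥ R.rep = 0 then (1 : ZMod p) else 0)

lemma pcode_lift {p : ℕ} [CharP F p] {c : PP F → ZMod p} (hc : c ∈ pcode p F) :
    ∃ φ ∈ vcode F, ∀ v, v ≠ 0 → φ v = ZMod.castHom (dvd_refl p) F (c (mkp v)) := by
  induction hc using Submodule.span_induction with
  | mem g h =>
    obtain ⟨m, rfl⟩ := h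
    refine ⟨_, Submodule.subset_span ⟨m, rfl⟩, fun v hv => ?_⟩
    obtain ⟨a, ha⟩ := Projectivization.exists_smul_eq_mk_rep F v hv
    have : (mkp v).rep = (a : F) • v := by rw [mkp_of v hv, ← ha]; rfl
    simp only [this, dotProduct_smul, smul_eq_mul, mul_eq_zero, Units.ne_zero, false_or]
    split_ifs <;> simp
  | zero => exact ⟨0, Submodule.zero_mem _, by simp⟩
  | add c d _ _ h1 h2 =>
    obtain ⟨φ, a1, a2⟩ := h1
    obtain ⟨ψ, b1, b2⟩ := h2
    exact ⟨φ + ψ, Submodule.add_mem _ a1 b1, fun v hv => by simp [a2 v hv, b2 v hv]⟩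
  | smul a c _ h1 =>
    obtain ⟨φ, a1, a2⟩ := h1
    exact ⟨(ZMod.castHom (dvd_refl p) F a) • φ, Submodule.smul_mem _ _ a1,
      fun v hv => by simp [a2 v hv]⟩

lemma goodCode {p q : ℕ} (hp : p.Prime) (hp3 : 3 < p) (hq : q = p ^ 2) [CharP F p]
    (hF : Fintype.card F = q ^ 2) : GoodCode (PP F) (PP F) p q (pcode p F) := by
  have := Fact.mk hp
  refine ⟨hp, hp3, hq, order_eq.trans hF, fun l => ?_, fun c hc l hl => ?_⟩
  · refine Submodule.subset_span ⟨l.rep, ?_⟩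
    funext R
    simp only [lineInd, mem_rep']
  · obtain ⟨φ, hφ, hφc⟩ := pcode_lift hc
    have hne : ∀ v, v ≠ 0 → (φ v ≠ 0 ↔ mkp v ∈ supp c) := by
      intro v hv
      rw [hφc v hv, mem_supp, Ne, Ne, map_eq_zero]
    have hlc := sz_univ (P := PP F) l
    rw [order_eq, hF] at hlc
    obtain ⟨R0, hR0l, hR0⟩ : ∃ R0, R0 ∈ l ∧ R0 ∉ supp c := by
      by_contra! hcon
      have : sz Finset.univ l ≤ sz (supp c) l := by
        refine Finset.card_le_card fun R hR => ?_
        rw [Finset.mem_filter] at hR ⊢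
        exact ⟨hcon R hR.2, hR.2⟩
      omega
    have hq0 : 1 ≤ q ^ 2 := by rw [hq]; exact Nat.one_le_pow _ _ (Nat.pow_pos hp.pos)
    obtain ⟨R1, hR1, hR01⟩ : ∃ R1, R1 ∈ l ∧ R1 ≠ R0 := by
      have : 1 < (Finset.univ.filter (fun R : PP F => R ∈ l)).card := by
        rw [sz] at hlc; omega
      obtain ⟨R1, h1, h2⟩ := Finset.exists_mem_ne this R0
      exact ⟨R1, (Finset.mem_filter.1 h1).2, h2⟩
    obtain ⟨R2, hR2⟩ := Nondegenerate.exists_point (P := PP F) l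
    have hi : indep R0.rep R1.rep := indep_of_ne R0.rep_nonzero R1.rep_nonzero
      (by rw [mkp_rep, mkp_rep]; exact hR01.symm)
    rw [mem_rep'] at hR2
    set s := sz (supp c) l with hs
    have hsz := sz_param hi l (by rwa [mkp_rep]) (by rwa [mkp_rep]) (supp c) (by rwa [mkp_rep])
    have hm0 : l.rep ⬝ᵥ R0.rep = 0 := (mem_rep' _ _).1 hR0l
    have hm1 : l.rep ⬝ᵥ R1.rep = 0 := (mem_rep' _ _).1 hR1
    have hdot : ∀ x y : F, l.rep ⬝ᵥ (x • R0.rep + (y • R1.rep + R2.rep)) = l.rep ⬝ᵥ R2.rep := by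
      intro x y
      rw [dotProduct_add, dotProduct_add, dotProduct_smul, dotProduct_smul, hm0, hm1]
      simp
    have hnz : ∀ x y : F, x • R0.rep + (y • R1.rep + R2.rep) ≠ 0 := by
      intro x y h0
      have := hdot x y
      rw [h0, dotProduct_zero] at this
      exact hR2 this.symm
    have hb := vbound hφ R0.rep R1.rep R2.rep s (by
      rw [hs, hsz]; congr 1; ext x
      rw [Finset.mem_filter, Finset.mem_filter, hne _ (hi.2 x)]) (by rw [hF]; exact hl)
    have hcount : s + ∑ y : F, (Finset.univ.filter
        (fun x : F => φ (x • R0.rep + (y • R1.rep + R2.rep)) ≠ 0)).card ≤ (supp c).card := by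
      have e1 := Finset.card_filter_add_card_filter_not (s := supp c) (fun R => R ∈ l)
      rw [← e1, hs, sz]
      refine Nat.add_le_add_left ?_ _
      rw [← Finset.card_sigma]
      refine Finset.card_le_card_of_injOn
        (fun z => mkp (z.2 • R0.rep + (z.1 • R1.rep + R2.rep))) ?_ ?_
      · rintro ⟨y, x⟩ hz
        rw [Finset.mem_coe, Finset.mem_sigma, Finset.mem_filter] at hz
        rw [Finset.mem_coe, Finset.mem_filter]
        refine ⟨(hne _ (hnz x y)).1 hz.2.2, ?_⟩
        rw [mem_rep (hnz x y), hdot]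
        exact hR2
      · rintro ⟨y, x⟩ - ⟨y', x'⟩ - hz
        obtain ⟨a, ha⟩ := (mkp_eq (hnz x y) (hnz x' y')).1 hz
        have h1 : l.rep ⬝ᵥ (a • (x' • R0.rep + (y' • R1.rep + R2.rep))) = l.rep ⬝ᵥ R2.rep := by
          rw [ha, hdot]
        rw [dotProduct_smul, hdot, smul_eq_mul] at h1
        have ha1 : a = 1 := mul_right_cancel₀ hR2 (by rw [h1, one_mul])
        rw [ha1, one_smul] at ha
        have h2 : (x' - x) • R0.rep + (y' - y) • R1.rep = 0 := by
          rw [sub_smul, sub_smul]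
          linear_combination (exp := 1) ha
        obtain ⟨h3, h4⟩ := hi.zero h2
        rw [sub_eq_zero] at h3 h4
        rw [h3, h4]
    rw [hF] at hb
    rcases Nat.eq_zero_or_pos s with h0 | h0
    · rw [h0]; omega
    · obtain ⟨t, ht⟩ : ∃ t, s = t + 1 := ⟨s - 1, by omega⟩
      rw [ht] at hb hcount ⊢
      rw [Nat.add_sub_cancel] at hb
      nlinarith

end plane
end QH

set_option linter.unusedSectionVars false
namespace QH
open scoped Classical LinearAlgebra.Projectivization
open Matrix Configuration

section bbw
variable {F : Type} [Field F] [Fintype F]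

/-- A unital whose characteristic function is in the code. -/
structure UCtx (p q : ℕ) (U : Finset (PP F)) (φ : (Fin 3 → F) → F) : Prop where
  prime : p.Prime
  p5 : 5 ≤ p
  qp : q = p ^ 2
  hF : Fintype.card F = q ^ 2
  char : CharP F p
  code : φ ∈ vcode F
  val : ∀ v, v ≠ 0 → φ v = if mkp v ∈ U then 1 else 0
  un : Unital (PP F) q U

/-- Parameters of the points of `U` on the line through `e` and `w`. -/
noncomputable def Aset (U : Finset (PP F)) (e w : Fin 3 → F) : Finset F :=
  Finset.univ.filter (fun x : F => mkp (x • e + w) ∈ U)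

lemma mem_Aset {U : Finset (PP F)} {e w : Fin 3 → F} {x : F} :
    x ∈ Aset U e w ↔ mkp (x • e + w) ∈ U := by simp [Aset]

variable {p q : ℕ} {U : Finset (PP F)} {φ : (Fin 3 → F) → F}

lemma UCtx.q25 (h : UCtx p q U φ) : 25 ≤ q := by
  have := h.p5
  rw [h.qp]; nlinarith

lemma UCtx.castq (h : UCtx p q U φ) : (q : F) = 0 := by
  have := h.char
  rw [h.qp]; push_cast
  rw [CharP.cast_eq_zero]; simp

lemma mom_eq (h : UCtx p q U φ) {e w : Fin 3 → F} (hi : indep e w) (k : ℕ) :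
    mom φ e k w = ∑ x ∈ Aset U e w, x ^ k := by
  rw [mom, Aset, Finset.sum_filter]
  refine Finset.sum_congr rfl fun x _ => ?_
  rw [h.val _ (hi.2 x)]
  split_ifs <;> simp

lemma exists_line (h : UCtx p q U φ) {e w : Fin 3 → F} (he : mkp e ∉ U) (hi : indep e w) :
    ∃ l : PP F, mkp e ∈ l ∧ mkp w ∈ l ∧ (Aset U e w).card = sz U l := by
  obtain ⟨l, ⟨h1, h2⟩, -⟩ := HasLines.existsUnique_line (PP F) (PP F) _ _ hi.ne
  exact ⟨l, h1, h2, (sz_param hi l h1 h2 U he).symm⟩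

lemma Aset_two (h : UCtx p q U φ) {e w : Fin 3 → F} (he : mkp e ∉ U) (hi : indep e w) :
    (Aset U e w).card = 1 ∨ (Aset U e w).card = q + 1 := by
  obtain ⟨l, -, -, hl⟩ := exists_line h he hi
  rw [hl]
  exact h.un.two l

lemma Aset_cast (h : UCtx p q U φ) {e w : Fin 3 → F} (he : mkp e ∉ U) (hi : indep e w) :
    ((Aset U e w).card : F) = 1 := by
  rcases Aset_two h he hi with h1 | h1 <;> rw [h1]
  · simp
  · push_cast; rw [h.castq, zero_add]

/-- `n` is the polar of the point `e` outside `U`. -/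
structure Polar (U : Finset (PP F)) (φ : (Fin 3 → F) → F) (e n : Fin 3 → F) : Prop where
  ne : e ≠ 0
  out : mkp e ∉ U
  lin : ∀ w, mom φ e 1 w = n ⬝ᵥ w
  dot : n ⬝ᵥ e = -1

lemma exists_polar (h : UCtx p q U φ) {e : Fin 3 → F} (he : e ≠ 0) (hU : mkp e ∉ U) :
    ∃ n, Polar U φ e n := by
  have hq := h.q25
  obtain ⟨n, hn⟩ := pws_lin (mom_mem h.code e (k := 1) (by rw [h.hF]; zify; rw [Nat.cast_sub]; push_cast; nlinarith; nlinarith))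
  refine ⟨n, he, hU, hn, ?_⟩
  obtain ⟨R, hR⟩ : ∃ R : PP F, R ≠ mkp e := by
    obtain ⟨l, hl⟩ := Nondegenerate.exists_line (L := PP F) (mkp e)
    have := sz_univ (P := PP F) l
    have h2 : 0 < sz Finset.univ l := by rw [this]; omega
    obtain ⟨R, hR⟩ := Finset.card_pos.1 h2
    exact ⟨R, fun hh => hl (hh ▸ (Finset.mem_filter.1 hR).2)⟩
  have hi : indep e R.rep := indep_of_ne he R.rep_nonzero (by rw [mkp_rep]; exact hR.symm)
  have e0 : mom φ e 0 R.rep = 1 := by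
    rw [mom_eq h hi]
    simp only [pow_zero, Finset.sum_const, nsmul_eq_mul, mul_one]
    exact Aset_cast h hU hi
  have e1 : mom φ e 1 (e + R.rep) = mom φ e 1 R.rep - mom φ e 0 R.rep := by
    simp only [mom]
    rw [← Equiv.sum_comp (Equiv.subRight (1 : F)), ← Finset.sum_sub_distrib]
    refine Finset.sum_congr rfl fun x _ => ?_
    simp only [Equiv.subRight_apply]
    have : (x - 1) • e + (e + R.rep) = x • e + R.rep := by rw [sub_smul, one_smul]; abel
    rw [this]; ring
  rw [hn, hn, e0, dotProduct_add] at e1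
  linear_combination e1

lemma Polar.n0 {e n : Fin 3 → F} (hP : Polar U φ e n) : n ≠ 0 := by
  rintro rfl
  have := hP.dot
  rw [zero_dotProduct] at this
  exact one_ne_zero (neg_eq_zero.1 this.symm)

lemma Polar.indep {e n w : Fin 3 → F} (hP : Polar U φ e n) (hw : w ≠ 0) (hn : n ⬝ᵥ w = 0) :
    indep e w := by
  refine ⟨hP.ne, fun x hx => ?_⟩
  have h1 : n ⬝ᵥ (x • e + w) = 0 := by rw [hx, dotProduct_zero]
  rw [dotProduct_add, dotProduct_smul, hP.dot, hn, smul_eq_mul] at h1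
  have : x = 0 := by linear_combination -h1
  rw [this, zero_smul, zero_add] at hx
  exact hw hx

lemma Polar.mem {e n w : Fin 3 → F} (hP : Polar U φ e n) (hw : w ≠ 0) :
    mkp w ∈ mkp n ↔ n ⬝ᵥ w = 0 := mkp_mem hw hP.n0

/-- tangents: the foot is on the polar -/
lemma Polar.tangent (h : UCtx p q U φ) {e n w : Fin 3 → F} (hP : Polar U φ e n) (hw : w ≠ 0)
    (hn : n ⬝ᵥ w = 0) (h1 : (Aset U e w).card = 1) : Aset U e w = {0} := by
  have hm := mom_eq h (hP.indep hw hn) 1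
  rw [hP.lin, hn] at hm
  obtain ⟨x, hx⟩ := Finset.card_eq_one.1 h1
  rw [hx] at hm
  simp at hm
  rw [hx, ← hm]

lemma mkp_of_Aset {e w : Fin 3 → F} (h : Aset U e w = {0}) : mkp w ∈ U := by
  have : (0 : F) ∈ Aset U e w := by rw [h]; simp
  rw [mem_Aset] at this
  simpa using this

lemma polar_feet (h : UCtx p q U φ) {e n : Fin 3 → F} (hP : Polar U φ e n) :
    sz U (mkp n) = q + 1 ∧ ∀ w, w ≠ 0 → mkp w ∈ U → n ⬝ᵥ w = 0 → Aset U e w = {0} := by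
  set l : PP F := mkp n with hl
  have hel : mkp e ∉ l := by
    rw [hP.mem hP.ne, hP.dot]; simp
  have hex : ∀ t : PP F, ∃ R : PP F, mkp e ∈ t → R ∈ t ∧ R ∈ l := by
    intro t
    by_cases ht : mkp e ∈ t
    · have : t ≠ l := fun hh => hel (hh ▸ ht)
      obtain ⟨T, hT, -⟩ := HasPoints.existsUnique_point (PP F) (PP F) t l this
      exact ⟨T, fun _ => hT⟩
    · exact ⟨l, fun hh => absurd hh ht⟩
  choose f hf using hex
  set T : Finset (PP F) := Finset.univ.filter (fun t : PP F => mkp e ∈ t ∧ sz U t = 1) with hT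
  have hTc : T.card = q + 1 := h.un.tan_out _ hP.out
  have hfoot : ∀ t ∈ T, ∀ w, w ≠ 0 → mkp w = f t → Aset U e w = {0} := by
    intro t ht w hw hwf
    rw [hT, Finset.mem_filter] at ht
    obtain ⟨h1, h2⟩ := hf t ht.2.1
    rw [← hwf] at h1 h2
    have hn : n ⬝ᵥ w = 0 := (hP.mem hw).1 h2
    refine hP.tangent h hw hn ?_
    rw [← ht.2.2, sz_param (hP.indep hw hn) t ht.2.1 h1 U hP.out, Aset]
  have hinj : Set.InjOn f T := by
    intro t ht t' ht' htt
    rw [Finset.mem_coe, hT, Finset.mem_filter] at ht ht'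
    have a1 := hf t ht.2.1
    have a2 := hf t' ht'.2.1
    rw [← htt] at a2
    have hne : f t ≠ mkp e := fun hh => hel (hh ▸ a1.2)
    exact (Nondegenerate.eq_or_eq a1.1 ht.2.1 a2.1 ht'.2.1).resolve_left hne
  have hsub : T.image f ⊆ U.filter (fun R => R ∈ l) := by
    intro R hR
    obtain ⟨t, ht, rfl⟩ := Finset.mem_image.1 hR
    have := hfoot t ht (f t).rep (f t).rep_nonzero (mkp_rep _)
    have h1 := mkp_of_Aset this
    rw [mkp_rep] at h1
    exact Finset.mem_filter.2 ⟨h1, (hf t (Finset.mem_filter.1 ht).2.1).2⟩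
  have hci : (T.image f).card = q + 1 := by rw [Finset.card_image_of_injOn hinj, hTc]
  have hle := Finset.card_le_card hsub
  rw [hci] at hle
  have hsz : sz U l = q + 1 := by
    rcases h.un.two l with h1 | h1
    · rw [sz] at h1
      have := h.q25
      omega
    · exact h1
  refine ⟨hsz, fun w hw hwU hn => ?_⟩
  have heq := Finset.eq_of_subset_of_card_le hsub (by rw [hci]; exact hsz.le)
  have hwm : mkp w ∈ U.filter (fun R => R ∈ l) :=
    Finset.mem_filter.2 ⟨hwU, (hP.mem hw).2 hn⟩
  rw [← heq] at hwm
  obtain ⟨t, ht, htw⟩ := Finset.mem_image.1 hwm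
  exact hfoot t ht w hw htw.symm

lemma mom_foot (h : UCtx p q U φ) {e n w : Fin 3 → F} (hP : Polar U φ e n) (hw : w ≠ 0)
    (hU : mkp w ∈ U) (hn : n ⬝ᵥ w = 0) {k : ℕ} (hk : k ≠ 0) : mom φ e k w = 0 := by
  rw [mom_eq h (hP.indep hw hn), (polar_feet h hP).2 w hw hU hn]
  simp [hk]

lemma exists_feet (h : UCtx p q U φ) {e n : Fin 3 → F} (hP : Polar U φ e n) :
    ∃ v1 v2 : Fin 3 → F, v1 ≠ 0 ∧ v2 ≠ 0 ∧ mkp v1 ∈ U ∧ mkp v2 ∈ U ∧ n ⬝ᵥ v1 = 0 ∧ n ⬝ᵥ v2 = 0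
      ∧ indep v1 v2 := by
  have hsz := (polar_feet h hP).1
  have hq := h.q25
  have : 1 < sz U (mkp n) := by omega
  rw [sz] at this
  obtain ⟨R1, h1, R2, h2, h12⟩ := Finset.one_lt_card.1 this
  rw [Finset.mem_filter] at h1 h2
  refine ⟨R1.rep, R2.rep, R1.rep_nonzero, R2.rep_nonzero, ?_, ?_, ?_, ?_, ?_⟩
  · rw [mkp_rep]; exact h1.1
  · rw [mkp_rep]; exact h2.1
  · rw [← hP.mem R1.rep_nonzero, mkp_rep]; exact h1.2
  · rw [← hP.mem R2.rep_nonzero, mkp_rep]; exact h2.2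
  · exact indep_of_ne R1.rep_nonzero R2.rep_nonzero (by rw [mkp_rep, mkp_rep]; exact h12)

lemma mom_zero (h : UCtx p q U φ) {e n w : Fin 3 → F} (hP : Polar U φ e n) (hw : w ≠ 0)
    (hn : n ⬝ᵥ w = 0) {k : ℕ} (hk : k ≠ 0) (hkq : k ≤ q) : mom φ e k w = 0 := by
  by_cases hU : mkp w ∈ U
  · exact mom_foot h hP hw hU hn hk
  obtain ⟨v, -, hv, -, hvU, -, hnv, -, -⟩ := exists_feet h hP
  have hi : indep v w := indep_of_ne hv hw (fun hh => hU (hh ▸ hvU))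
  have hq := h.q25
  obtain ⟨f, f1, f2, f3⟩ := pws_poly (mom_mem h.code e (k := k)
    (by rw [h.hF]; have : q + 1 < q ^ 2 := by nlinarith
        omega)) v w
  rw [mom_foot h hP hv hvU hnv hk] at f2
  have hdeg : f.natDegree < k := by
    rcases Nat.lt_or_ge f.natDegree k with h1 | h1
    · exact h1
    · have h2 : f.natDegree = k := le_antisymm f1 h1
      rw [← h2, Polynomial.coeff_natDegree, Polynomial.leadingCoeff_eq_zero] at f2
      rw [f2, Polynomial.natDegree_zero] at h2
      omega
  have hnw : ∀ y : F, n ⬝ᵥ (y • v + w) = 0 := fun y => by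
    rw [dotProduct_add, dotProduct_smul, hnv, hn]; simp
  have hroots : ∀ y ∈ Aset U v w, f.eval y = 0 := by
    intro y hy
    rw [mem_Aset] at hy
    rw [f3]
    exact mom_foot h hP (hi.2 y) hy (hnw y) hk
  have hcard : (Aset U v w).card = q := by
    have h1 := sz_param hi (mkp n) ((hP.mem hv).2 hnv) ((hP.mem hw).2 hn) (U.erase (mkp v))
      (Finset.notMem_erase _ _)
    have h2 : Aset U v w = Finset.univ.filter (fun x : F => mkp (x • v + w) ∈ U.erase (mkp v)) := by
      ext x
      rw [mem_Aset]
      simp [mkp_notMem hi x]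
    rw [h2, ← h1, sz]
    have h3 : (U.erase (mkp v)).filter (fun R => R ∈ mkp n)
        = (U.filter (fun R => R ∈ mkp n)).erase (mkp v) := by
      ext R; simp only [Finset.mem_filter, Finset.mem_erase]; tauto
    have h4 := (polar_feet h hP).1
    rw [sz] at h4
    rw [h3, Finset.card_erase_of_mem, h4, Nat.add_sub_cancel]
    exact Finset.mem_filter.2 ⟨hvU, (hP.mem hv).2 hnv⟩
  have hf0 := Polynomial.eq_zero_of_natDegree_lt_card_of_eval_eq_zero' f (Aset U v w) hroots
    (by omega)
  have := f3 0
  rw [hf0, Polynomial.eval_zero, zero_smul, zero_add] at this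
  exact this.symm

lemma mom_ne (h : UCtx p q U φ) {e n w : Fin 3 → F} (hP : Polar U φ e n) (hw : w ≠ 0)
    (hn : n ⬝ᵥ w = 0) (hA : (Aset U e w).card = q + 1) : mom φ e (q + 1) w ≠ 0 := by
  intro h0
  have hq := h.q25
  have hi := hP.indep hw hn
  obtain ⟨x0, hx0, hne⟩ := Finset.exists_mem_ne (show 1 < (Aset U e w).card by omega) 0
  set g : Polynomial F := ∏ x ∈ (Aset U e w).erase x0, (Polynomial.X - Polynomial.C x) with hg
  set f : Polynomial F := Polynomial.X * g with hf
  have hgd : g.natDegree = q := by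
    rw [hg, Polynomial.natDegree_prod_of_monic _ _ (fun x _ => Polynomial.monic_X_sub_C x)]
    simp [Finset.card_erase_of_mem hx0, hA]
  have hfd : f.natDegree < q + 2 := by
    have : f.natDegree ≤ 1 + q := by
      refine Polynomial.natDegree_mul_le.trans ?_
      rw [hgd, Polynomial.natDegree_X]
    omega
  have hsum : ∑ x ∈ Aset U e w, f.eval x = 0 := by
    have : ∀ x : F, f.eval x = ∑ k ∈ Finset.range (q + 2), f.coeff k * x ^ k :=
      fun x => Polynomial.eval_eq_sum_range' hfd x
    simp_rw [this]
    rw [Finset.sum_comm]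
    refine Finset.sum_eq_zero fun k hk => ?_
    rw [← Finset.mul_sum, ← mom_eq h hi]
    rcases Nat.eq_zero_or_pos k with hk0 | hk0
    · have : f.coeff k = 0 := by rw [hk0, hf]; simp
      rw [this, zero_mul]
    · rw [Finset.mem_range] at hk
      rcases Nat.lt_or_ge k (q + 1) with h1 | h1
      · rw [mom_zero h hP hw hn (by omega) (by omega), mul_zero]
      · have : k = q + 1 := by omega
        rw [this, h0, mul_zero]
  rw [Finset.sum_eq_single x0] at hsum
  · rw [hf, Polynomial.eval_mul, Polynomial.eval_X, mul_eq_zero] at hsum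
    have h1 := hsum.resolve_left hne
    rw [hg, Polynomial.eval_prod, Finset.prod_eq_zero_iff] at h1
    obtain ⟨x, hx, hx'⟩ := h1
    rw [Polynomial.eval_sub, Polynomial.eval_X, Polynomial.eval_C, sub_eq_zero] at hx'
    exact (Finset.mem_erase.1 hx).1 hx'.symm
  · intro x hx hxx
    rw [hf, Polynomial.eval_mul, hg, Polynomial.eval_prod,
      Finset.prod_eq_zero (Finset.mem_erase.2 ⟨hxx, hx⟩) (by simp), mul_zero]
  · intro hh; exact absurd hx0 hh

lemma exists_pole (h : UCtx p q U φ) (m : PP F) (hm : sz U m = q + 1) :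
    ∃ e n : Fin 3 → F, Polar U φ e n ∧ mkp n = m := by
  have hq := h.q25
  have : 1 < sz U m := by omega
  rw [sz] at this
  obtain ⟨R1, h1, R2, h2, h12⟩ := Finset.one_lt_card.1 this
  rw [Finset.mem_filter] at h1 h2
  have htan : ∀ R ∈ U, ∃ t : PP F, R ∈ t ∧ sz U t = 1 := by
    intro R hR
    obtain ⟨t, ht⟩ := Finset.card_pos.1 (show 0 < _ by rw [h.un.tan_in R hR]; omega)
    exact ⟨t, (Finset.mem_filter.1 ht).2⟩
  obtain ⟨t1, ht1, hs1⟩ := htan R1 h1.1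
  obtain ⟨t2, ht2, hs2⟩ := htan R2 h2.1
  have huniq : ∀ t : PP F, sz U t = 1 → ∀ R ∈ U, ∀ R' ∈ U, R ∈ t → R' ∈ t → R = R' := by
    intro t ht R hR R' hR' hRt hRt'
    have hle : sz U t ≤ 1 := by omega
    rw [sz] at hle
    exact Finset.card_le_one.1 hle R (Finset.mem_filter.2 ⟨hR, hRt⟩) R'
      (Finset.mem_filter.2 ⟨hR', hRt'⟩)
  have ht12 : t1 ≠ t2 := by
    rintro rfl
    exact h12 (huniq t1 hs1 R1 h1.1 R2 h2.1 ht1 ht2)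
  obtain ⟨T, ⟨hT1, hT2⟩, -⟩ := HasPoints.existsUnique_point (PP F) (PP F) t1 t2 ht12
  have hTU : T ∉ U := by
    intro hTU
    have a1 := huniq t1 hs1 R1 h1.1 T hTU ht1 hT1
    have a2 := huniq t2 hs2 R2 h2.1 T hTU ht2 hT2
    exact h12 (a1.trans a2.symm)
  obtain ⟨n, hP⟩ := exists_polar h T.rep_nonzero (by rwa [mkp_rep])
  have hon : ∀ R ∈ U, ∀ t : PP F, sz U t = 1 → R ∈ t → T ∈ t → R ∈ mkp n := by
    intro R hR t hs hRt hTt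
    have hi : indep T.rep R.rep := indep_of_ne T.rep_nonzero R.rep_nonzero (by
      rw [mkp_rep, mkp_rep]; rintro rfl; exact hTU hR)
    have hc := sz_param hi t (by rwa [mkp_rep]) (by rwa [mkp_rep]) U hP.out
    rw [hs] at hc
    have hA1 : (Aset U T.rep R.rep).card = 1 := hc.symm
    have h0 : (0 : F) ∈ Aset U T.rep R.rep := by
      rw [mem_Aset, zero_smul, zero_add, mkp_rep]; exact hR
    have hA : Aset U T.rep R.rep = {0} := by
      obtain ⟨x, hx⟩ := Finset.card_eq_one.1 hA1
      rw [hx, Finset.mem_singleton] at h0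
      rw [hx, h0]
    have hmo := mom_eq h hi 1
    rw [hA, hP.lin] at hmo
    simp at hmo
    rw [← mkp_rep R, hP.mem R.rep_nonzero]
    exact hmo
  refine ⟨T.rep, n, hP, ?_⟩
  exact (Nondegenerate.eq_or_eq (hon R1 h1.1 t1 hs1 ht1 hT1) (hon R2 h2.1 t2 hs2 ht2 hT2)
    h1.2 h2.2).resolve_left h12

end bbw
end QH

set_option linter.unusedSectionVars false
namespace QH
open scoped Classical LinearAlgebra.Projectivization
open Matrix Configuration

section bbw2
variable {F : Type} [Field F] [Fintype F]

lemma sesq_expand {p n q : ℕ} (hp : p.Prime) [CharP F p] (hq : q = p ^ n)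
    (N : Matrix (Fin 3) (Fin 3) F) (e w : Fin 3 → F) (x y : F) :
    sesq q N (x • e + y • w) (x • e + y • w) = sesq q N e e * x ^ (q + 1)
      + sesq q N w e * (y * x ^ q) + sesq q N e w * (x * y ^ q) + sesq q N w w * y ^ (q + 1) := by
  have : Fact p.Prime := ⟨hp⟩
  have hadd : ∀ a b : F, (a + b) ^ q = a ^ q + b ^ q := by
    intro a b; rw [hq]; exact add_pow_char_pow a b _ _
  simp only [sesq, Finset.sum_mul]
  simp only [← Finset.sum_add_distrib]
  refine Finset.sum_congr rfl fun i _ => Finset.sum_congr rfl fun j _ => ?_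
  simp only [Pi.add_apply, Pi.smul_apply, smul_eq_mul, hadd, mul_pow]
  ring

lemma poly3 {q : ℕ} (hq : 2 ≤ q) {s t u : F}
    (h : Polynomial.C s * Polynomial.X ^ q + Polynomial.C t * Polynomial.X + Polynomial.C u = 0) :
    t = 0 ∧ u = 0 := by
  have k1 := congrArg (fun f => Polynomial.coeff f 1) h
  have k0 := congrArg (fun f => Polynomial.coeff f 0) h
  simp only [Polynomial.coeff_add, Polynomial.coeff_C_mul, Polynomial.coeff_X_pow,
    Polynomial.coeff_X, Polynomial.coeff_C] at k0 k1
  rw [if_neg (by omega)] at k0 k1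
  simp at k0 k1
  exact ⟨k1, k0⟩

lemma curve_aux {p q : ℕ} (hp : p.Prime) [CharP F p] (hq : q = p ^ 2)
    (hF : Fintype.card F = q ^ 2) (A : Finset F) (hA : A.card = q + 1) (hs : ∑ x ∈ A, x = 0)
    (a b c d : F) (ha : a ≠ 0)
    (hr : ∀ x ∈ A, a * x ^ (q + 1) + b * x ^ q + c * x + d = 0) :
    ∃ δ : F, δ ^ q = δ ∧ ∀ x ∈ A, x ^ (q + 1) = δ := by
  have : Fact p.Prime := ⟨hp⟩
  have hq1 : 4 ≤ q := by have := hp.two_le; rw [hq]; nlinarith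
  have hadd : ∀ a b : F, (a + b) ^ q = a ^ q + b ^ q := by
    intro a b; rw [hq]; exact add_pow_char_pow a b _ _
  have hneg : ∀ a : F, (-a) ^ q = -(a ^ q) := by
    intro a
    have h1 := hadd a (-a)
    rw [add_neg_cancel, zero_pow (by omega)] at h1
    linear_combination -h1
  have hfr : ∀ x : F, (x ^ q) ^ q = x := by
    intro x
    rw [← pow_mul, ← sq, ← hF, FiniteField.pow_card]
  set P : Polynomial F := ∏ x ∈ A, (Polynomial.X - Polynomial.C x) with hP
  set G : Polynomial F := Polynomial.C a * Polynomial.X ^ (q + 1) + Polynomial.C b * Polynomial.X ^ q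
    + Polynomial.C c * Polynomial.X + Polynomial.C d with hG
  have hPm : P.Monic := Polynomial.monic_prod_of_monic _ _ fun x _ => Polynomial.monic_X_sub_C x
  have hPd : P.natDegree = q + 1 := by
    rw [hP, Polynomial.natDegree_prod_of_monic _ _ (fun x _ => Polynomial.monic_X_sub_C x)]
    simp [hA]
  have hGd : G.natDegree ≤ q + 1 := by
    rw [hG]; compute_degree!
  have c1 : G.coeff (q + 1) = a := by
    rw [hG]
    simp [Polynomial.coeff_X, Polynomial.coeff_C, Polynomial.coeff_X_pow, show q ≠ 0 by omega]
  have c2 : G.coeff q = b := by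
    rw [hG]
    simp [Polynomial.coeff_X, Polynomial.coeff_C, Polynomial.coeff_X_pow, show q ≠ 0 by omega, show 1 ≠ q by omega]
  have p1 : P.coeff (q + 1) = 1 := by rw [← hPd]; exact hPm
  have p2 : P.coeff q = 0 := by
    have h1 := Polynomial.prod_X_sub_C_coeff_card_pred A (fun x => x) (by omega)
    rw [hA, Nat.add_sub_cancel, hs, neg_zero] at h1
    exact h1
  have hz : G - Polynomial.C a * P = 0 := by
    refine Polynomial.eq_zero_of_natDegree_lt_card_of_eval_eq_zero' _ A ?_ ?_
    · intro x hx
      have h1 : P.eval x = 0 := by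
        rw [hP, Polynomial.eval_prod, Finset.prod_eq_zero hx (by simp)]
      have h2 : G.eval x = a * x ^ (q + 1) + b * x ^ q + c * x + d := by rw [hG]; simp
      rw [Polynomial.eval_sub, Polynomial.eval_mul, h1, h2, hr x hx]; simp
    · rw [hA]
      have h1 : (G - Polynomial.C a * P).natDegree ≤ q := by
        rw [Polynomial.natDegree_le_iff_coeff_eq_zero]
        intro N hN
        rcases Nat.lt_or_ge (q + 1) N with h2 | h2
        · rw [Polynomial.coeff_sub, Polynomial.coeff_C_mul,
            Polynomial.coeff_eq_zero_of_natDegree_lt (by omega),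
            Polynomial.coeff_eq_zero_of_natDegree_lt (by omega)]; simp
        · have : N = q + 1 := by omega
          rw [this, Polynomial.coeff_sub, Polynomial.coeff_C_mul, c1, p1]; simp
      omega
  have hb : b = 0 := by
    have h1 := congrArg (fun f => Polynomial.coeff f q) hz
    simp only [Polynomial.coeff_sub, Polynomial.coeff_C_mul, c2, p2] at h1
    simpa using h1
  set c' := c / a with hc'
  set d' := d / a with hd'
  have hx1 : ∀ x ∈ A, x ^ (q + 1) = -(c' * x + d') := by
    intro x hx
    have h1 := hr x hx
    rw [hb] at h1
    rw [hc', hd']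
    field_simp
    linear_combination h1
  have hx2 : ∀ x ∈ A, x ^ (q + 1) = -(c' ^ q * x ^ q + d' ^ q) := by
    intro x hx
    have h1 := congrArg (fun t => t ^ q) (hx1 x hx)
    simp only [hneg, hadd, mul_pow] at h1
    rw [← h1]
    calc x ^ (q + 1) = x ^ q * x := pow_succ _ _
      _ = x ^ q * (x ^ q) ^ q := by rw [hfr]
      _ = (x ^ (q + 1)) ^ q := by rw [pow_succ x q, mul_pow, mul_comm]
  have hK : Polynomial.C (c' ^ q) * Polynomial.X ^ q + Polynomial.C (-c') * Polynomial.X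
      + Polynomial.C (d' ^ q - d') = 0 := by
    refine Polynomial.eq_zero_of_natDegree_lt_card_of_eval_eq_zero' _ A ?_ ?_
    · intro x hx
      simp only [Polynomial.eval_add, Polynomial.eval_sub, Polynomial.eval_mul, Polynomial.eval_C,
        Polynomial.eval_X, Polynomial.eval_pow]
      linear_combination hx2 x hx - hx1 x hx
    · rw [hA]
      refine Nat.lt_succ_of_le ?_
      compute_degree!
      omega
  obtain ⟨k1, k0⟩ := poly3 (by omega) hK
  rw [neg_eq_zero] at k1
  refine ⟨-d', ?_, fun x hx => ?_⟩
  · rw [hneg]; linear_combination -k0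
  · rw [hx1 x hx, k1]; ring

variable {p q : ℕ} {U : Finset (PP F)} {φ : (Fin 3 → F) → F}

lemma exists_mat (h : UCtx p q U φ) (e : Fin 3 → F) :
    ∃ N, ∀ w, mom φ e (q + 1) w = sesq q N w w := by
  have := h.char
  have hq := h.q25
  refine pws_sesq h.prime h.qp (mom_mem h.code e ?_)
  rw [h.hF]
  have : q + 3 < q ^ 2 := by nlinarith
  omega

lemma lemZ (h : UCtx p q U φ) {e n w : Fin 3 → F} (hP : Polar U φ e n) (hw : w ≠ 0)
    (hn : n ⬝ᵥ w = 0) (hA : (Aset U e w).card = q + 1) :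
    (mom φ e (q + 1) w) ^ q = mom φ e (q + 1) w ∧
      ∀ x ∈ Aset U e w, x ^ (q + 1) = mom φ e (q + 1) w := by
  have := h.char
  have hq := h.q25
  have hi := hP.indep hw hn
  obtain ⟨m, hem, hwm, hcard⟩ := exists_line h hP.out hi
  obtain ⟨e', n', hP', hm⟩ := exists_pole h m (by rw [← hcard, hA])
  obtain ⟨N, hN⟩ := exists_mat h e'
  have hon : ∀ x : F, n' ⬝ᵥ (x • e + w) = 0 := by
    intro x
    rw [← hm, hP'.mem hP.ne] at hem
    rw [← hm, hP'.mem hw] at hwm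
    rw [dotProduct_add, dotProduct_smul, hem, hwm]; simp
  have hexp : ∀ x : F, mom φ e' (q + 1) (x • e + w) = sesq q N e e * x ^ (q + 1)
      + sesq q N w e * x ^ q + sesq q N e w * x + sesq q N w w := by
    intro x
    have := sesq_expand h.prime h.qp N e w x 1
    rw [one_smul] at this
    rw [hN, this]; simp
  have hr : ∀ x ∈ Aset U e w, sesq q N e e * x ^ (q + 1)
      + sesq q N w e * x ^ q + sesq q N e w * x + sesq q N w w = 0 := by
    intro x hx
    rw [← hexp]
    exact mom_foot h hP' (hi.2 x) (mem_Aset.1 hx) (hon x) (by omega)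
  have ha : sesq q N e e ≠ 0 := by
    intro ha
    rw [ha] at hr hexp
    have hK : Polynomial.C (sesq q N w e) * Polynomial.X ^ q
        + Polynomial.C (sesq q N e w) * Polynomial.X + Polynomial.C (sesq q N w w) = 0 := by
      refine Polynomial.eq_zero_of_natDegree_lt_card_of_eval_eq_zero' _ (Aset U e w) ?_ ?_
      · intro x hx
        simp only [Polynomial.eval_add, Polynomial.eval_mul, Polynomial.eval_C,
          Polynomial.eval_X, Polynomial.eval_pow]
        linear_combination hr x hx
      · rw [hA]
        refine Nat.lt_succ_of_le ?_
        compute_degree!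
        omega
    obtain ⟨x, hx⟩ : ∃ x, x ∉ Aset U e w := by
      by_contra! hh
      have h1 : Aset U e w = Finset.univ := Finset.eq_univ_iff_forall.2 hh
      rw [h1, Finset.card_univ, h.hF] at hA
      nlinarith
    have h0 : mom φ e' (q + 1) (x • e + w) = 0 := by
      have := congrArg (fun f => Polynomial.eval x f) hK
      simp only [Polynomial.eval_add, Polynomial.eval_mul, Polynomial.eval_C,
          Polynomial.eval_X, Polynomial.eval_pow, Polynomial.eval_zero] at this
      rw [hexp]; linear_combination this
    have hi' := hP'.indep (hi.2 x) (hon x)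
    rcases Aset_two h hP'.out hi' with h1 | h1
    · exact hx (mem_Aset.2 (mkp_of_Aset (hP'.tangent h (hi.2 x) (hon x) h1)))
    · exact mom_ne h hP' (hi.2 x) (hon x) h1 h0
  have hs : ∑ x ∈ Aset U e w, x = 0 := by
    have h1 := mom_eq h hi 1
    rw [hP.lin, hn] at h1
    simpa using h1.symm
  obtain ⟨δ, hδ, hx⟩ := curve_aux h.prime h.qp h.hF _ hA hs _ _ _ _ ha hr
  have hmom : mom φ e (q + 1) w = δ := by
    rw [mom_eq h hi, Finset.sum_congr rfl hx, Finset.sum_const, hA, nsmul_eq_mul]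
    push_cast
    rw [h.castq]; ring
  rw [hmom]
  exact ⟨hδ, hx⟩

lemma lemZ' (h : UCtx p q U φ) {e n w : Fin 3 → F} (hP : Polar U φ e n) (hw : w ≠ 0)
    (hn : n ⬝ᵥ w = 0) :
    (mom φ e (q + 1) w) ^ q = mom φ e (q + 1) w ∧
      ∀ x, mkp (x • e + w) ∈ U ↔ x ^ (q + 1) = mom φ e (q + 1) w := by
  have hq := h.q25
  have hi := hP.indep hw hn
  rcases Aset_two h hP.out hi with h1 | h1
  · have h2 := hP.tangent h hw hn h1
    have h3 : mom φ e (q + 1) w = 0 := by rw [mom_eq h hi, h2]; simp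
    rw [h3]
    refine ⟨zero_pow (by omega), fun x => ?_⟩
    rw [← mem_Aset, h2, Finset.mem_singleton]
    constructor
    · rintro rfl; exact zero_pow (by omega)
    · intro hx; exact pow_eq_zero_iff (by omega) |>.1 hx
  · obtain ⟨a1, a2⟩ := lemZ h hP hw hn h1
    refine ⟨a1, fun x => ?_⟩
    set δ := mom φ e (q + 1) w with hδ
    have hsub : Aset U e w ⊆ (Polynomial.nthRoots (q + 1) δ).toFinset := by
      intro x hx
      rw [Multiset.mem_toFinset, Polynomial.mem_nthRoots (by omega)]
      exact a2 x hx
    have hc : (Polynomial.nthRoots (q + 1) δ).toFinset.card ≤ (Aset U e w).card := by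
      rw [h1]
      exact (Multiset.toFinset_card_le _).trans (Polynomial.card_nthRoots _ _)
    have heq := Finset.eq_of_subset_of_card_le hsub hc
    rw [← mem_Aset, heq, Multiset.mem_toFinset, Polynomial.mem_nthRoots (by omega)]

theorem bbw (h : UCtx p q U φ) : ∃ (e0 e1 e2 : Fin 3 → F) (b : F), b ≠ 0 ∧
    (∀ x y z : F, x • e0 + (y • e1 + z • e2) = 0 → x = 0 ∧ y = 0 ∧ z = 0) ∧
    ∀ x y z : F, ¬ (x = 0 ∧ y = 0 ∧ z = 0) →
      (mkp (x • e0 + (y • e1 + z • e2)) ∈ U ↔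
        x ^ (q + 1) = b * (z * y ^ q) + b ^ q * (y * z ^ q)) := by
  have := h.char
  have : Fact p.Prime := ⟨h.prime⟩
  have hq := h.q25
  have hadd : ∀ a b : F, (a + b) ^ q = a ^ q + b ^ q := by
    intro a b; rw [h.qp]; exact add_pow_char_pow a b _ _
  have hfr : ∀ x : F, (x ^ q) ^ q = x := by
    intro x
    rw [← pow_mul, ← sq, ← h.hF, FiniteField.pow_card]
  obtain ⟨R, hR⟩ : ∃ R : PP F, R ∉ U := by
    by_contra! hh
    obtain ⟨l⟩ : Nonempty (PP F) := ⟨mkp 0⟩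
    have hU : U = Finset.univ := Finset.eq_univ_iff_forall.2 hh
    have h1 := sz_univ (P := PP F) l
    have h2 := h.un.two l
    rw [hU, h1, order_eq, h.hF] at h2
    rcases h2 with h2 | h2 <;> nlinarith
  have hR' : mkp R.rep ∉ U := by rwa [mkp_rep]
  obtain ⟨n, hP⟩ := exists_polar h R.rep_nonzero hR'
  obtain ⟨e1, e2, he1, he2, hU1, hU2, hn1, hn2, hi⟩ := exists_feet h hP
  obtain ⟨N, hN⟩ := exists_mat h R.rep
  set e0 := R.rep with he0
  have hn : ∀ y z : F, n ⬝ᵥ (y • e1 + z • e2) = 0 := by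
    intro y z; rw [dotProduct_add, dotProduct_smul, dotProduct_smul, hn1, hn2]; simp
  have s1 : sesq q N e1 e1 = 0 := by
    rw [← hN]; exact mom_foot h hP he1 hU1 hn1 (by omega)
  have s2 : sesq q N e2 e2 = 0 := by
    rw [← hN]; exact mom_foot h hP he2 hU2 hn2 (by omega)
  set b := sesq q N e2 e1 with hb
  set c := sesq q N e1 e2 with hc
  have hexp : ∀ y z : F, mom φ e0 (q + 1) (y • e1 + z • e2) = b * (z * y ^ q) + c * (y * z ^ q) := by
    intro y z
    rw [hN, sesq_expand h.prime h.qp, s1, s2]; ring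
  have hne : ∀ y : F, y • e1 + (1 : F) • e2 ≠ 0 := by
    intro y; rw [one_smul]; exact hi.2 y
  have hcb : c = b ^ q := by
    have hK : Polynomial.C (c ^ q - b) * Polynomial.X ^ q
        + Polynomial.C (b ^ q - c) * Polynomial.X = 0 := by
      refine Polynomial.eq_zero_of_natDegree_lt_card_of_eval_eq_zero' _ Finset.univ ?_ ?_
      · intro y _
        have h1 := (lemZ' h hP (hne y) (hn y 1)).1
        rw [hexp, hadd] at h1
        simp only [mul_pow, hfr, one_pow, mul_one, one_mul] at h1
        simp only [Polynomial.eval_add, Polynomial.eval_mul, Polynomial.eval_C,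
          Polynomial.eval_X, Polynomial.eval_pow]
        linear_combination h1
      · rw [Finset.card_univ, h.hF]
        refine lt_of_le_of_lt (b := q) ?_ (by nlinarith)
        compute_degree!
        omega
    obtain ⟨k1, -⟩ := poly3 (q := q) (s := c ^ q - b) (t := b ^ q - c) (u := 0) (by omega)
      (by rw [hK, Polynomial.C_0, add_zero])
    linear_combination -k1
  have hzero : ∀ x y z : F, x • e0 + (y • e1 + z • e2) = 0 → x = 0 ∧ y = 0 ∧ z = 0 := by
    intro x y z h0
    have h1 : n ⬝ᵥ (x • e0 + (y • e1 + z • e2)) = 0 := by rw [h0, dotProduct_zero]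
    rw [dotProduct_add, hn, dotProduct_smul, hP.dot, smul_eq_mul] at h1
    have hx : x = 0 := by linear_combination -h1
    rw [hx, zero_smul, zero_add] at h0
    exact ⟨hx, hi.zero h0⟩
  refine ⟨e0, e1, e2, b, ?_, hzero, ?_⟩
  · intro hb0
    have hall : ∀ y : F, mkp (y • e1 + e2) ∈ U := by
      intro y
      have h1 := (lemZ' h hP (hne y) (hn y 1)).2 0
      rw [hexp, hcb, hb0, zero_smul, zero_add, one_smul] at h1
      rw [h1, zero_pow (by omega), zero_pow (by omega)]; ring
    have hsz := sz_param hi (mkp n) ((hP.mem he1).2 hn1) ((hP.mem he2).2 hn2) (U.erase (mkp e1))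
      (Finset.notMem_erase _ _)
    have h2 : Finset.univ.filter (fun x : F => mkp (x • e1 + e2) ∈ U.erase (mkp e1))
        = Finset.univ := by
      refine Finset.filter_true_of_mem fun x _ => ?_
      exact Finset.mem_erase.2 ⟨mkp_notMem hi x, hall x⟩
    rw [h2, Finset.card_univ, h.hF] at hsz
    have h3 : sz (U.erase (mkp e1)) (mkp n) ≤ sz U (mkp n) :=
      Finset.card_le_card (Finset.filter_subset_filter _ (Finset.erase_subset _ _))
    rw [(polar_feet h hP).1] at h3
    nlinarith
  · intro x y z hxyz
    by_cases hyz : y • e1 + z • e2 = 0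
    · obtain ⟨hy, hz⟩ := hi.zero hyz
      have hx : x ≠ 0 := fun hx => hxyz ⟨hx, hy, hz⟩
      rw [hyz, add_zero, mkp_smul hx, hy, hz]
      constructor
      · intro hh; exact absurd hh hR'
      · intro hh
        exfalso
        rw [zero_pow (by omega)] at hh
        simp at hh
        exact hx hh
    · have h1 := (lemZ' h hP hyz (hn y z)).2 x
      rw [h1, hexp, hcb]

end bbw2
end QH

set_option linter.unusedSectionVars false
namespace QH
open scoped Classical LinearAlgebra.Projectivization
open Matrix Configuration

section herm
variable {F : Type} [Field F] [Fintype F]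

theorem herm_of_unital {p q : ℕ} (hp : p.Prime) (hp3 : 3 < p) (hq : q = p ^ 2) [CharP F p]
    (hF : Fintype.card F = q ^ 2) {U : Finset (PP F)} (hU : GoodSet (PP F) p (pcode p F) U)
    (hall : ∀ m : PP F, sz U m ≤ q + 1) :
    ∃ g : (Fin 3 → F) →ₗ[F] (Fin 3 → F), LinearMap.ker g = ⊥ ∧
      ∃ A : Matrix (Fin 3) (Fin 3) F, IsUnit A.det ∧ Aᵀ = A.map (fun a => a ^ q) ∧
        ∀ y : Fin 3 → F, y ≠ 0 → (mkp (g y) ∈ U ↔ ∑ i, ∑ j, y i * A i j * (y j) ^ q = 0) := by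
  have : Fact p.Prime := ⟨hp⟩
  have hu := unital (goodCode hp hp3 hq hF) hU hall
  obtain ⟨φ, hφ, hφv⟩ := pcode_lift hU.mem
  have hp5 : 5 ≤ p := by
    rcases Nat.lt_or_ge p 5 with h | h
    · have : p = 4 := by omega
      rw [this] at hp; exact absurd hp (by norm_num)
    · exact h
  have h : UCtx p q U φ := ⟨hp, hp5, hq, hF, inferInstance, hφ, fun v hv => by
    rw [hφv v hv, ind]; split_ifs <;> simp, hu⟩
  obtain ⟨e0, e1, e2, b, hb, hz, hm⟩ := bbw h
  have hq25 := h.q25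
  have hadd : ∀ a b : F, (a + b) ^ q = a ^ q + b ^ q := by
    intro a b; rw [h.qp]; exact add_pow_char_pow a b _ _
  have hneg : ∀ a : F, (-a) ^ q = -(a ^ q) := by
    intro a
    have h1 := hadd a (-a)
    rw [add_neg_cancel, zero_pow (by omega)] at h1
    linear_combination -h1
  have hfr : ∀ x : F, (x ^ q) ^ q = x := by
    intro x
    rw [← pow_mul, ← sq, ← h.hF, FiniteField.pow_card]
  have hq0 : q ≠ 0 := by omega
  let g : (Fin 3 → F) →ₗ[F] (Fin 3 → F) :=
    { toFun := fun y => y 0 • e0 + (y 1 • e1 + y 2 • e2)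
      map_add' := fun x y => by simp only [Pi.add_apply, add_smul]; abel
      map_smul' := fun a y => by
        simp only [Pi.smul_apply, smul_eq_mul, mul_smul, smul_add, RingHom.id_apply] }
  have hgy : ∀ y, g y = y 0 • e0 + (y 1 • e1 + y 2 • e2) := fun y => rfl
  have hy0 : ∀ y : Fin 3 → F, y 0 = 0 ∧ y 1 = 0 ∧ y 2 = 0 → y = 0 := by
    intro y hy
    funext i
    fin_cases i
    · exact hy.1
    · exact hy.2.1
    · exact hy.2.2
  refine ⟨g, ?_, !![1, 0, 0; 0, 0, -b ^ q; 0, -b, 0], ?_, ?_, ?_⟩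
  · rw [LinearMap.ker_eq_bot']
    intro y hy
    rw [hgy] at hy
    exact hy0 y (hz _ _ _ hy)
  · rw [isUnit_iff_ne_zero, Matrix.det_fin_three]
    simp [hb, hq0]
  · ext i j
    fin_cases i <;> fin_cases j <;> simp [hq0, hneg, hfr]
  · intro y hy
    rw [hgy, hm _ _ _ (fun hh => hy (hy0 y hh))]
    simp [Fin.sum_univ_three]
    constructor
    · intro hh; linear_combination hh
    · intro hh; linear_combination hh

end herm
end QH

set_option linter.unusedSectionVars false
namespace QH
open scoped Classical LinearAlgebra.Projectivization
open Matrix Configuration Module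

section glob
variable {F : Type} [Field F]

/-- a generator of a point -/
lemma exists_gen {n : ℕ} (P : ProjPoint F n) : ∃ v : Fin n → F, v ≠ 0 ∧ P.1 = Submodule.span F {v} := by
  obtain ⟨v, hv, h⟩ := finrank_eq_one_iff'.1 P.2
  refine ⟨v.1, fun h0 => hv (Subtype.ext h0), le_antisymm ?_ ?_⟩
  · intro w hw
    obtain ⟨c, hc⟩ := h ⟨w, hw⟩
    rw [Submodule.mem_span_singleton]
    exact ⟨c, congrArg Subtype.val hc⟩
  · rw [Submodule.span_singleton_le_iff_mem]
    exact v.2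

section mp
variable {M : Type} [AddCommGroup M] [Module F M] {n : ℕ}

/-- The map on points induced by an injective linear map. -/
noncomputable def mp (e : M →ₗ[F] (Fin n → F)) (he : LinearMap.ker e = ⊥) (R : ℙ F M) :
    ProjPoint F n :=
  ⟨Submodule.span F {e R.rep}, finrank_span_singleton (fun h =>
    R.rep_nonzero (LinearMap.ker_eq_bot'.1 he _ h))⟩

variable (e : M →ₗ[F] (Fin n → F)) (he : LinearMap.ker e = ⊥)

lemma mp_le (R : ℙ F M) (S : Submodule F (Fin n → F)) : (mp e he R).1 ≤ S ↔ e R.rep ∈ S := by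
  rw [mp]; exact Submodule.span_singleton_le_iff_mem _ _

lemma mp_mk (v : M) (hv : v ≠ 0) : (mp e he (Projectivization.mk F v hv)).1 = Submodule.span F {e v} := by
  obtain ⟨a, ha⟩ := Projectivization.exists_smul_eq_mk_rep F v hv
  have : (mp e he (Projectivization.mk F v hv)).1
    = Submodule.span F {e (Projectivization.mk F v hv).rep} := rfl
  rw [this, ← ha, Units.smul_def, map_smul]
  exact Submodule.span_singleton_smul_eq a.isUnit _

lemma mp_inj : Function.Injective (mp e he) := by
  intro R R' h
  have h1 : Submodule.span F {e R.rep} = Submodule.span F {e R'.rep} := congrArg Subtype.val h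
  obtain ⟨z, hz⟩ := Submodule.span_singleton_eq_span_singleton.1 h1
  rw [Units.smul_def, ← map_smul] at hz
  have hz' := (LinearMap.ker_eq_bot.1 he) hz
  rw [← R.mk_rep, ← R'.mk_rep, eq_comm, Projectivization.mk_eq_mk_iff]
  exact ⟨z, hz'⟩

lemma mp_surj (P : ProjPoint F n) (hP : P.1 ≤ LinearMap.range e) : ∃ R, mp e he R = P := by
  obtain ⟨v, hv, h⟩ := exists_gen P
  rw [h, Submodule.span_singleton_le_iff_mem] at hP
  obtain ⟨y, rfl⟩ := hP
  have hy : y ≠ 0 := by rintro rfl; simp at hv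
  exact ⟨Projectivization.mk F y hy, Subtype.ext ((mp_mk e he y hy).trans h.symm)⟩

lemma secant_eq (V : Set (ProjPoint F n)) (S : Submodule F (Fin n → F))
    (hS : S ≤ LinearMap.range e) :
    secant F n V S = {R : ℙ F M | mp e he R ∈ V ∧ e R.rep ∈ S}.ncard := by
  rw [secant, ← Set.ncard_image_of_injective _ (mp_inj e he)]
  congr 1
  ext P
  constructor
  · rintro ⟨h1, h2⟩
    obtain ⟨R, rfl⟩ := mp_surj e he P (le_trans h2 hS)
    exact ⟨R, ⟨h1, (mp_le e he R S).1 h2⟩, rfl⟩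
  · rintro ⟨R, ⟨h1, h2⟩, rfl⟩
    exact ⟨h1, (mp_le e he R S).2 h2⟩

end mp

variable [Fintype F]

instance instFiniteProjPoint (n : ℕ) : Finite (ProjPoint F n) := by
  unfold ProjPoint
  infer_instance

lemma ncard_points {n : ℕ} (S : Submodule F (Fin n → F)) :
    Fintype.card F ^ finrank F S - 1 = (pointsIn F n S).ncard * (Fintype.card F - 1) := by
  have h := Projectivization.card F S
  have h1 := secant_eq S.subtype (by simp) Set.univ S (by simp)
  rw [secant, Set.univ_inter] at h1
  rw [h1]
  have h2 : {R : ℙ F S | mp S.subtype (by simp) R ∈ Set.univ ∧ S.subtype R.rep ∈ S} = Set.univ := by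
    ext R; simp
  rw [h2, Set.ncard_univ]
  have : Fintype S := Fintype.ofFinite _
  rw [Nat.card_eq_fintype_card, Nat.card_eq_fintype_card (α := F),
    Module.card_eq_pow_finrank (K := F)] at h
  exact h

lemma cast_points {p n : ℕ} (hp : p.Prime) (hF : p ∣ Fintype.card F) (S : Submodule F (Fin n → F))
    (hS : finrank F S ≠ 0) : ((pointsIn F n S).ncard : ZMod p) = 1 := by
  have h := ncard_points S
  have hQ : 1 ≤ Fintype.card F := Fintype.card_pos
  have hQ' : 1 ≤ Fintype.card F ^ finrank F S := Nat.one_le_pow _ _ hQ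
  have h1 := congrArg (fun t : ℕ => (t : ZMod p)) h
  simp only [Nat.cast_mul, Nat.cast_sub hQ, Nat.cast_sub hQ', Nat.cast_pow,
    (ZMod.natCast_eq_zero_iff _ _).2 hF, zero_pow hS, Nat.cast_one] at h1
  linear_combination h1

lemma line_sum {p n : ℕ} (hp : p.Prime) (hF : p ∣ Fintype.card F) (hn : 2 ≤ n)
    [Fintype (ProjPoint F n)]
    {c : ProjPoint F n → ZMod p} (hc : c ∈ hypCode F p n) (ℓ : Submodule F (Fin n → F))
    (hℓ : finrank F ℓ = 2) : ∑ P, (if P.1 ≤ ℓ then c P else 0) = ∑ P, c P := by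
  have key : ∀ S : Submodule F (Fin n → F), finrank F S ≠ 0 →
      ∑ P : ProjPoint F n, (if P.1 ≤ S then (1 : ZMod p) else 0) = 1 := by
    intro S hS
    refine Eq.trans ?_ (cast_points hp hF S hS)
    rw [Finset.sum_boole]
    congr 1
    rw [← Set.ncard_coe_finset]
    congr 1
    ext P; simp [pointsIn]
  induction hc using Submodule.span_induction with
  | mem c h =>
    obtain ⟨H, hH, rfl⟩ := h
    have h1 := key H (by omega)
    have hcv : ∀ P, charVec F p n (pointsIn F n H) P = if P.1 ≤ H then 1 else 0 := by
      intro P; simp [charVec, Set.indicator_apply, pointsIn]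
    have hd : finrank F (H ⊓ ℓ : Submodule F (Fin n → F)) ≠ 0 := by
      have a1 := Submodule.finrank_sup_add_finrank_inf_eq H ℓ
      have a2 := Submodule.finrank_le (H ⊔ ℓ)
      rw [Module.finrank_fin_fun] at a2
      omega
    have h2 := key _ hd
    simp only [hcv]
    rw [h1]
    refine Eq.trans ?_ h2
    refine Finset.sum_congr rfl fun P _ => ?_
    simp only [le_inf_iff]
    split_ifs <;> tauto
  | zero => simp
  | add c d _ _ h1 h2 =>
    simp only [Pi.add_apply]
    rw [Finset.sum_add_distrib, ← h1, ← h2, ← Finset.sum_add_distrib]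
    refine Finset.sum_congr rfl fun P _ => ?_
    split_ifs <;> simp
  | smul a c _ h1 =>
    simp only [Pi.smul_apply]
    rw [← Finset.smul_sum, ← h1, Finset.smul_sum]
    refine Finset.sum_congr rfl fun P _ => ?_
    split_ifs <;> simp

lemma secant_mod {p q r : ℕ} (hp : p.Prime) (hq : q = p ^ 2) (hF : Fintype.card F = q ^ 2)
    (hr : 4 ≤ r) {V : Set (ProjPoint F (r + 1))} (hV : IsQuasiHermitian F q r V)
    (hcode : charVec F p (r + 1) V ∈ hypCode F p (r + 1))
    (ℓ : Submodule F (Fin (r + 1) → F)) (hℓ : finrank F ℓ = 2) :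
    secant F (r + 1) V ℓ ≡ 1 [MOD p] := by
  have : Fintype (ProjPoint F (r + 1)) := Fintype.ofFinite _
  have hdvd : p ∣ Fintype.card F := by rw [hF, hq]; exact dvd_pow (dvd_pow_self p (by norm_num)) (by norm_num)
  have h := line_sum hp hdvd (by omega) hcode ℓ hℓ
  have hcv : ∀ P, charVec F p (r + 1) V P = if P ∈ V then 1 else 0 := by
    intro P; simp [charVec, Set.indicator_apply]
  simp only [hcv] at h
  have e1 : ∑ P : ProjPoint F (r + 1), (if P ∈ V then (1 : ZMod p) else 0) = (V.ncard : ZMod p) := by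
    rw [Finset.sum_boole, ← Set.ncard_coe_finset]
    congr 2
    ext P; simp
  have e2 : ∑ P : ProjPoint F (r + 1), (if P.1 ≤ ℓ then (if P ∈ V then (1 : ZMod p) else 0) else 0)
      = (secant F (r + 1) V ℓ : ZMod p) := by
    rw [secant]
    have : ∀ P : ProjPoint F (r + 1), (if P.1 ≤ ℓ then (if P ∈ V then (1 : ZMod p) else 0) else 0)
      = if P ∈ V ∩ pointsIn F (r + 1) ℓ then 1 else 0 := by
      intro P
      simp only [Set.mem_inter_iff, pointsIn, Set.mem_ofPred_eq]
      split_ifs <;> tauto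
    simp only [this]
    rw [Finset.sum_boole, ← Set.ncard_coe_finset]
    congr 2
    ext P; simp
  have e3 : (V.ncard : ZMod p) = 1 := by
    have h1 := congrArg (fun t : ℤ => (t : ZMod p)) hV.1
    have hq0 : (q : ZMod p) = 0 := by rw [hq]; simp
    push_cast at h1
    rw [hq0, zero_pow (by omega), zero_pow (by omega), zero_pow (by omega)] at h1
    have h3 : ((-1 : ZMod p) ^ r) * (-1) ^ r = 1 := by rw [← mul_pow]; simp
    linear_combination -h1 + h3
  rw [e1, e2, e3] at h
  rw [← ZMod.natCast_eq_natCast_iff, h]; simp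

end glob
end QH

set_option linter.unusedSectionVars false
namespace QH
open scoped Classical LinearAlgebra.Projectivization
open Matrix Configuration Module

section glob2
variable {F : Type} [Field F] [Fintype F]

/-- Every line lies in a plane with few points. -/
lemma arith_avg {q r v M : ℕ} (hq : 2 ≤ q) (hr : 4 ≤ r)
    (hv : (v : ℤ) * ((q : ℤ) ^ 2 - 1) = ((q : ℤ) ^ (r + 1) + (-1) ^ r) * ((q : ℤ) ^ r - (-1) ^ r))
    (hM : (q ^ 2) ^ (r - 1) - 1 = M * (q ^ 2 - 1)) : v < M * (q ^ 3 + 1) := by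
  obtain ⟨s, rfl⟩ := Nat.exists_eq_add_of_le hr
  have h1 : 1 ≤ (q ^ 2) ^ (4 + s - 1) := Nat.one_le_pow _ _ (by positivity)
  have h2 : 1 ≤ q ^ 2 := Nat.one_le_pow _ _ (by omega)
  have hM' : ((q : ℤ) ^ 2) ^ (3 + s) - 1 = M * ((q : ℤ) ^ 2 - 1) := by
    have := congrArg (fun t : ℕ => (t : ℤ)) hM
    simp only [Nat.cast_mul, Nat.cast_sub h1, Nat.cast_sub h2] at this
    push_cast at this
    rw [show 4 + s - 1 = 3 + s by omega] at this
    exact this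
  have hqz : (2 : ℤ) ≤ q := by exact_mod_cast hq
  have hpos : (0 : ℤ) < (q : ℤ) ^ 2 - 1 := by nlinarith
  zify
  refine lt_of_mul_lt_mul_right ?_ hpos.le
  rw [hv]
  set x : ℤ := (q : ℤ) with hx
  have e : (M : ℤ) * (x ^ 3 + 1) * (x ^ 2 - 1) = ((x ^ 2) ^ (3 + s) - 1) * (x ^ 3 + 1) := by
    rw [hM']; ring
  push_cast
  rw [e]
  set t : ℤ := x ^ s with ht
  have ht1 : 1 ≤ t := one_le_pow₀ (by linarith)
  have e1 : (x ^ 2) ^ (3 + s) = x ^ 6 * t ^ 2 := by rw [ht]; ring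
  have e2 : x ^ (4 + s + 1) = x ^ 5 * t := by rw [ht]; ring
  have e3 : x ^ (4 + s) = x ^ 4 * t := by rw [ht]; ring
  rw [e1, e2, e3]
  have hx3 : x ^ 3 < x ^ 4 * t := by
    have : x ^ 3 < x ^ 4 := pow_lt_pow_right₀ (by linarith) (by norm_num)
    have h4 : 0 < x ^ 4 := by positivity
    nlinarith
  have hx6 : x ^ 5 * t ≤ x ^ 6 * t ^ 2 := by
    have : x ^ 5 ≤ x ^ 6 := pow_le_pow_right₀ (by linarith) (by norm_num)
    have h5 : 0 ≤ x ^ 5 := by positivity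
    have ht2 : t ≤ t ^ 2 := by nlinarith
    calc x ^ 5 * t ≤ x ^ 6 * t := by gcongr
      _ ≤ x ^ 6 * t ^ 2 := by gcongr
  have hx4 : x ^ 4 * t ≤ x ^ 5 * t := by
    have : x ^ 4 ≤ x ^ 5 := pow_le_pow_right₀ (by linarith) (by norm_num)
    gcongr
  rcases neg_one_pow_eq_or ℤ (4 + s) with h | h <;> rw [h] <;> nlinarith

lemma exists_plane {q r : ℕ} (hq : 2 ≤ q) (hF : Fintype.card F = q ^ 2)
    (hr : 4 ≤ r) {V : Set (ProjPoint F (r + 1))} (hV : IsQuasiHermitian F q r V)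
    (ℓ : Submodule F (Fin (r + 1) → F)) (hℓ : finrank F ℓ = 2) :
    ∃ α : Submodule F (Fin (r + 1) → F), ℓ ≤ α ∧ finrank F α = 3 ∧
      secant F (r + 1) V α ≤ q ^ 3 + secant F (r + 1) V ℓ := by
  have : Fintype (ProjPoint F (r + 1)) := Fintype.ofFinite _
  have hfq : finrank F ((Fin (r + 1) → F) ⧸ ℓ) = r - 1 := by
    have h1 := Submodule.finrank_quotient_add_finrank ℓ
    rw [hℓ, Module.finrank_fin_fun] at h1
    omega
  have : Finite ((Fin (r + 1) → F) ⧸ ℓ) := Module.finite_of_finite F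
  have : Fintype ((Fin (r + 1) → F) ⧸ ℓ) := Fintype.ofFinite _
  have : Fintype (ℙ F ((Fin (r + 1) → F) ⧸ ℓ)) := Fintype.ofFinite _
  have hM := Projectivization.card F ((Fin (r + 1) → F) ⧸ ℓ)
  rw [Nat.card_eq_fintype_card, Nat.card_eq_fintype_card (α := F), Nat.card_eq_fintype_card,
    Module.card_eq_pow_finrank (K := F), hfq, hF] at hM
  have hlt := arith_avg hq hr hV.1 hM
  choose gen gen0 hgen using fun P : ProjPoint F (r + 1) => exists_gen P
  have hne : Nonempty (ℙ F ((Fin (r + 1) → F) ⧸ ℓ)) := by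
    rw [← Fintype.card_pos_iff]
    rcases Nat.eq_zero_or_pos (Fintype.card (ℙ F ((Fin (r + 1) → F) ⧸ ℓ))) with h | h
    · rw [h] at hlt; omega
    · exact h
  obtain ⟨y0⟩ := hne
  let f : ProjPoint F (r + 1) → ℙ F ((Fin (r + 1) → F) ⧸ ℓ) := fun P =>
    if h : ℓ.mkQ (gen P) ≠ 0 then Projectivization.mk F (ℓ.mkQ (gen P)) h else y0
  set s : Finset (ProjPoint F (r + 1)) := Finset.univ.filter (fun P => P ∈ V ∧ ¬ P.1 ≤ ℓ) with hs
  have hscard : s.card ≤ V.ncard := by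
    rw [← Set.ncard_coe_finset]
    refine Set.ncard_le_ncard ?_ (Set.toFinite _)
    intro P hP
    rw [Finset.mem_coe, hs, Finset.mem_filter] at hP
    exact hP.2.1
  obtain ⟨y, -, hy⟩ := Finset.exists_card_fiber_lt_of_card_lt_mul (s := s) (t := Finset.univ)
    (f := f) (n := q ^ 3 + 1) (by rw [Finset.card_univ]; omega)
  obtain ⟨v, hv⟩ := ℓ.mkQ_surjective y.rep
  have hvl : v ∉ ℓ := by
    intro h
    rw [← Submodule.ker_mkQ ℓ, LinearMap.mem_ker, hv] at h
    exact y.rep_nonzero h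
  have hv0 : v ≠ 0 := by rintro rfl; exact hvl ℓ.zero_mem
  refine ⟨ℓ ⊔ Submodule.span F {v}, le_sup_left, ?_, ?_⟩
  · have h1 := Submodule.finrank_sup_add_finrank_inf_eq ℓ (Submodule.span F {v})
    have h2 := (Submodule.disjoint_span_singleton' hv0).2 hvl
    rw [h2.eq_bot, finrank_bot, hℓ, finrank_span_singleton hv0] at h1
    omega
  · have hsub : V ∩ pointsIn F (r + 1) (ℓ ⊔ Submodule.span F {v})
        ⊆ (V ∩ pointsIn F (r + 1) ℓ) ∪ (s.filter (fun P => f P = y) : Finset _) := by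
      rintro P ⟨h1, h2⟩
      by_cases h3 : P.1 ≤ ℓ
      · exact Or.inl ⟨h1, h3⟩
      · right
        rw [Finset.mem_coe, Finset.mem_filter, hs, Finset.mem_filter]
        refine ⟨⟨Finset.mem_univ _, h1, h3⟩, ?_⟩
        have h4 : ℓ.mkQ (gen P) ≠ 0 := by
          intro h4
          rw [← LinearMap.mem_ker, Submodule.ker_mkQ] at h4
          apply h3
          rw [hgen P, Submodule.span_singleton_le_iff_mem]
          exact h4
        have h5 : gen P ∈ ℓ ⊔ Submodule.span F {v} := by
          have : P.1 ≤ ℓ ⊔ Submodule.span F {v} := h2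
          rw [hgen P, Submodule.span_singleton_le_iff_mem] at this
          exact this
        obtain ⟨a, ha, b, hb, hab⟩ := Submodule.mem_sup.1 h5
        obtain ⟨c, rfl⟩ := Submodule.mem_span_singleton.1 hb
        have h6 : ℓ.mkQ (gen P) = c • y.rep := by
          rw [← hab, map_add, map_smul, hv]
          have : ℓ.mkQ a = 0 := by rw [← LinearMap.mem_ker, Submodule.ker_mkQ]; exact ha
          rw [this, zero_add]
        simp only [f]
        rw [dif_pos h4, ← y.mk_rep, Projectivization.mk_eq_mk_iff']
        exact ⟨c, h6.symm⟩
    have h1 := Set.ncard_le_ncard hsub (Set.toFinite _)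
    have h2 := Set.ncard_union_le (V ∩ pointsIn F (r + 1) ℓ)
      ((s.filter (fun P => f P = y) : Finset _) : Set (ProjPoint F (r + 1)))
    rw [Set.ncard_coe_finset] at h2
    rw [secant, secant]
    omega

section plane
variable {n : ℕ} (e : (Fin 3 → F) →ₗ[F] (Fin n → F)) (he : LinearMap.ker e = ⊥)

/-- pull back of a point set to the plane -/
noncomputable def pb (V : Set (ProjPoint F n)) : Finset (PP F) :=
  Finset.univ.filter (fun R => mp e he R ∈ V)

/-- line of the plane as a submodule -/
noncomputable def ln (w : PP F) : Submodule F (Fin n → F) :=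
  Submodule.map e (LinearMap.ker (Fintype.linearCombination F w.rep))

lemma lc_eq (w y : Fin 3 → F) : Fintype.linearCombination F w y = w ⬝ᵥ y := by
  simp [Fintype.linearCombination_apply, dotProduct, mul_comm]

lemma mem_ln (he : LinearMap.ker e = ⊥) (w : PP F) (y : Fin 3 → F) : e y ∈ ln e w ↔ w.rep ⬝ᵥ y = 0 := by
  rw [ln, Submodule.mem_map]
  constructor
  · rintro ⟨z, hz, hzy⟩
    rw [LinearMap.ker_eq_bot.1 he hzy, LinearMap.mem_ker, lc_eq] at hz
    exact hz
  · intro h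
    exact ⟨y, by rw [LinearMap.mem_ker, lc_eq]; exact h, rfl⟩

lemma ln_le (w : PP F) : ln e w ≤ LinearMap.range e := by
  rw [ln]; exact LinearMap.map_le_range

lemma functional {m : ℕ} (f : (Fin m → F) →ₗ[F] F) :
    ∃ w : Fin m → F, ∀ y, f y = w ⬝ᵥ y := by
  refine ⟨fun i => f fun j => if i = j then 1 else 0, fun y => ?_⟩
  rw [LinearMap.pi_apply_eq_sum_univ f y]
  simp [dotProduct, mul_comm]

lemma finrank_ker_dot {m : ℕ} (f : (Fin m → F) →ₗ[F] F) (hf : f ≠ 0) :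
    finrank F (LinearMap.ker f) + 1 = m := by
  have h1 := LinearMap.finrank_range_add_finrank_ker f
  rw [LinearMap.range_eq_top.2 (LinearMap.surjective hf), finrank_top, Module.finrank_self,
    Module.finrank_fin_fun] at h1
  omega

lemma ln_finrank (he : LinearMap.ker e = ⊥) (w : PP F) : finrank F (ln e w) = 2 := by
  have h0 : Fintype.linearCombination F w.rep ≠ 0 := by
    intro h
    apply w.rep_nonzero
    funext i
    have h1 := congrArg (fun g => g (Pi.single i 1)) h
    simpa [lc_eq] using h1
  have h1 := finrank_ker_dot _ h0
  rw [ln, ← (Submodule.equivMapOfInjective e (LinearMap.ker_eq_bot.1 he) _).finrank_eq]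
  omega

lemma exists_ln (he : LinearMap.ker e = ⊥) (ℓ : Submodule F (Fin n → F)) (hℓ : finrank F ℓ = 2) (hle : ℓ ≤ LinearMap.range e) :
    ∃ w : PP F, ln e w = ℓ := by
  have hmap : Submodule.map e (Submodule.comap e ℓ) = ℓ := Submodule.map_comap_eq_of_le hle
  have hlt : Submodule.comap e ℓ < ⊤ := by
    rw [lt_top_iff_ne_top]
    intro h
    have h1 := LinearMap.finrank_range_of_inj (LinearMap.ker_eq_bot.1 he)
    rw [h, Submodule.map_top] at hmap
    rw [hmap, hℓ, Module.finrank_fin_fun] at h1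
    omega
  obtain ⟨f, hf, hfk⟩ := Submodule.exists_le_ker_of_lt_top _ hlt
  obtain ⟨w, hw⟩ := functional f
  have hw0 : w ≠ 0 := by
    rintro rfl
    apply hf
    ext i
    simp [hw]
  refine ⟨mkp w, ?_⟩
  refine (Submodule.eq_of_le_of_finrank_eq ?_ (hℓ.trans (ln_finrank e he _).symm)).symm
  intro x hx
  obtain ⟨y, rfl⟩ := hle hx
  rw [mem_ln e he]
  have h1 : w ⬝ᵥ y = 0 := by rw [← hw]; exact hfk hx
  obtain ⟨a, ha⟩ := Projectivization.exists_smul_eq_mk_rep F w hw0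
  rw [mkp_of w hw0, ← ha, Units.smul_def, smul_dotProduct, h1, smul_zero]

lemma sz_pb (V : Set (ProjPoint F n)) (w : PP F) : sz (pb e he V) w = secant F n V (ln e w) := by
  rw [secant_eq e he V _ (ln_le e w), sz, ← Set.ncard_coe_finset]
  congr 1
  ext R
  simp only [Finset.coe_filter, pb, Finset.mem_filter, Finset.mem_univ, true_and,
    Set.mem_ofPred_eq, mem_ln e he, mem_rep']

lemma card_pb (V : Set (ProjPoint F n)) :
    (pb e he V).card = secant F n V (LinearMap.range e) := by
  rw [secant_eq e he V _ le_rfl, ← Set.ncard_coe_finset]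
  congr 1
  ext R
  simp [pb]

lemma pull_code {p : ℕ} (hn : 1 ≤ n) {c : ProjPoint F n → ZMod p} (hc : c ∈ hypCode F p n) :
    (fun R => c (mp e he R)) ∈ pcode p F := by
  induction hc using Submodule.span_induction with
  | mem c h =>
    obtain ⟨H, hH, rfl⟩ := h
    have hlt : H < ⊤ := by
      rw [lt_top_iff_ne_top]
      rintro rfl
      rw [finrank_top, Module.finrank_fin_fun] at hH
      omega
    obtain ⟨f, hf, hfk⟩ := Submodule.exists_le_ker_of_lt_top _ hlt
    have hHf : H = LinearMap.ker f := by
      refine Submodule.eq_of_le_of_finrank_eq hfk ?_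
      have := finrank_ker_dot f hf
      omega
    obtain ⟨m, hm⟩ := functional (f ∘ₗ e)
    refine Submodule.subset_span ⟨m, ?_⟩
    funext R
    have h1 : (m ⬝ᵥ R.rep = 0) ↔ mp e he R ∈ pointsIn F n H := by
      rw [← hm]
      show _ ↔ (mp e he R).1 ≤ H
      rw [mp_le, hHf]
      rfl
    simp only [charVec, Set.indicator_apply, h1]
    rfl
  | zero => exact Submodule.zero_mem _
  | add c d _ _ h1 h2 => exact Submodule.add_mem _ h1 h2
  | smul a c _ h1 => exact Submodule.smul_mem _ a h1

end plane

lemma goodSet_pb {p q r : ℕ} (hp : p.Prime) (hq : q = p ^ 2) (hF : Fintype.card F = q ^ 2)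
    (hr : 4 ≤ r) {V : Set (ProjPoint F (r + 1))} (hV : IsQuasiHermitian F q r V)
    (hcode : charVec F p (r + 1) V ∈ hypCode F p (r + 1))
    (e : (Fin 3 → F) →ₗ[F] (Fin (r + 1) → F)) (he : LinearMap.ker e = ⊥) :
    GoodSet (PP F) p (pcode p F) (pb e he V) := by
  refine ⟨?_, fun w => ?_⟩
  · have h := pull_code e he (by omega) hcode
    convert h using 1
    funext R
    simp [ind, pb, charVec, Set.indicator_apply]
  · rw [sz_pb]
    exact secant_mod hp hq hF hr hV hcode _ (ln_finrank e he w)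

lemma exists_emb {n : ℕ} (α : Submodule F (Fin n → F)) (hα : finrank F α = 3) :
    ∃ e : (Fin 3 → F) →ₗ[F] (Fin n → F), LinearMap.ker e = ⊥ ∧ LinearMap.range e = α := by
  have g : (Fin 3 → F) ≃ₗ[F] α := LinearEquiv.ofFinrankEq _ _ (by rw [hα, Module.finrank_fin_fun])
  refine ⟨α.subtype ∘ₗ g.toLinearMap, ?_, ?_⟩
  · rw [LinearMap.ker_eq_bot]
    exact α.injective_subtype.comp g.injective
  · rw [LinearMap.range_comp, LinearEquiv.range, Submodule.map_top, Submodule.range_subtype]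

lemma line_alt {p q r : ℕ} (hp : p.Prime) (hp3 : 3 < p) (hq : q = p ^ 2)
    (hF : Fintype.card F = q ^ 2) [CharP F p]
    (hr : 4 ≤ r) {V : Set (ProjPoint F (r + 1))} (hV : IsQuasiHermitian F q r V)
    (hcode : charVec F p (r + 1) V ∈ hypCode F p (r + 1))
    (ℓ : Submodule F (Fin (r + 1) → F)) (hℓ : finrank F ℓ = 2)
    (hfull : secant F (r + 1) V ℓ ≤ q ^ 2) :
    secant F (r + 1) V ℓ ≤ q + 1 ∨ secant F (r + 1) V ℓ + p = q ^ 2 + 1 := by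
  obtain ⟨α, hα, hα3, hsec⟩ := exists_plane (by rw [hq]; nlinarith) hF hr hV ℓ hℓ
  obtain ⟨e, he, hre⟩ := exists_emb α hα3
  obtain ⟨w, hw⟩ := exists_ln e he ℓ hℓ (by rw [hre]; exact hα)
  have hG := goodSet_pb hp hq hF hr hV hcode e he
  have h1 := sz_pb e he V w
  have h2 := card_pb e he V
  rw [hw] at h1
  rw [hre] at h2
  have := long_line (goodCode hp hp3 hq hF) hG w (by rw [h1]; exact hfull) (by rw [h1, h2]; exact hsec)
  rwa [h1] at this

end glob2
end QH

/-- in PG(r, p⁴) (so `q = p²`), if a plane `π` is not contained in `V`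
and no line of `π` meets `π ∩ V` in exactly `p⁴ - p + 1` points, then `π ∩ V` is a
classical unital of `π` or a union of `i` distinct concurrent lines of `π` with
`1 ≤ i ≤ p² + 1`. -/
theorem stmt18 (p r : ℕ) (hp : p.Prime) (hp3 : 3 < p) (hr : 4 ≤ r)
    (F : Type) [Field F] [Fintype F] (hF : Fintype.card F = p ^ 4)
    (V : Set (ProjPoint F (r + 1))) (hV : IsQuasiHermitian F (p ^ 2) r V)
    (hcode : charVec F p (r + 1) V ∈ hypCode F p (r + 1))
    (π : Submodule F (Fin (r + 1) → F)) (hπ : finrank F π = 3)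
    (hnot : ¬ pointsIn F (r + 1) π ⊆ V)
    (hnosec : ∀ ℓ : Submodule F (Fin (r + 1) → F), ℓ ≤ π → finrank F ℓ = 2 →
      secant F (r + 1) V ℓ ≠ p ^ 4 - p + 1) :
    IsClassicalUnital F (p ^ 2) (r + 1) π (V ∩ pointsIn F (r + 1) π) ∨
    (∃ i : ℕ, 1 ≤ i ∧ i ≤ p ^ 2 + 1 ∧
      ∃ L : Finset (Submodule F (Fin (r + 1) → F)), L.card = i ∧
        (∀ ℓ ∈ L, ℓ ≤ π ∧ finrank F ℓ = 2) ∧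
        (∃ P : ProjPoint F (r + 1), ∀ ℓ ∈ L, P.1 ≤ ℓ) ∧
        V ∩ pointsIn F (r + 1) π = ⋃ ℓ ∈ L, pointsIn F (r + 1) ℓ) := by
  classical
  have : Fact p.Prime := ⟨hp⟩
  have : CharP F p := charP_of_card_eq_prime_pow hF
  have hF' : Fintype.card F = (p ^ 2) ^ 2 := by rw [hF]; ring
  obtain ⟨e, he, hre⟩ := QH.exists_emb π hπ
  have hG := QH.goodSet_pb hp rfl hF' hr hV hcode e he
  have hC := QH.goodCode hp hp3 rfl hF'
  have hall : ∀ w : QH.PP F, QH.sz (QH.pb e he V) w ≤ p ^ 2 + 1 ∨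
      QH.sz (QH.pb e he V) w = (p ^ 2) ^ 2 + 1 := by
    intro w
    have hle : QH.sz (QH.pb e he V) w ≤ (p ^ 2) ^ 2 + 1 := by
      have h1 : QH.sz (QH.pb e he V) w ≤ QH.sz (Finset.univ : Finset (QH.PP F)) w := by
        unfold QH.sz
        exact Finset.card_le_card (Finset.filter_subset_filter _ (Finset.subset_univ _))
      have h2 := QH.sz_univ (P := QH.PP F) w
      rw [QH.order_eq, hF'] at h2
      omega
    rcases Nat.lt_or_ge ((p ^ 2) ^ 2) (QH.sz (QH.pb e he V) w) with h | h
    · right; omega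
    · left
      rw [QH.sz_pb] at h ⊢
      rcases QH.line_alt hp hp3 rfl hF' hr hV hcode _ (QH.ln_finrank e he w) h with h1 | h1
      · exact h1
      · exfalso
        refine hnosec _ (hre ▸ QH.ln_le e w) (QH.ln_finrank e he w) ?_
        have : p ≤ p ^ 4 := Nat.le_self_pow (by norm_num) p
        rw [show (p ^ 2) ^ 2 = p ^ 4 by ring] at h1
        omega
  by_cases hA : ∃ w : QH.PP F, QH.sz (QH.pb e he V) w = (p ^ 2) ^ 2 + 1
  · right
    obtain ⟨R0, hR0⟩ : ∃ R0, R0 ∉ QH.pb e he V := by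
      rw [Set.not_subset] at hnot
      obtain ⟨P, h1, h2⟩ := hnot
      obtain ⟨R, rfl⟩ := QH.mp_surj e he P (by rw [hre]; exact h1)
      exact ⟨R, by simp [QH.pb, h2]⟩
    obtain ⟨hc, ⟨R, hR⟩, hT⟩ := QH.pencil hC hG hall R0 hR0
      (Finset.univ.filter (fun w : QH.PP F => QH.sz (QH.pb e he V) w = (p ^ 2) ^ 2 + 1))
      (by intro m; simp) (by obtain ⟨w, hw⟩ := hA; exact ⟨w, by simpa using hw⟩)
    set A := Finset.univ.filter (fun w : QH.PP F => QH.sz (QH.pb e he V) w = (p ^ 2) ^ 2 + 1) with hAdef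
    have hmem : ∀ (T w : QH.PP F), (QH.mp e he T).1 ≤ QH.ln e w ↔ T ∈ w := by
      intro T w
      rw [QH.mp_le, QH.mem_ln e he, QH.mem_rep']
    refine ⟨(A.image (QH.ln e)).card, ?_, Finset.card_image_le.trans hc, A.image (QH.ln e), rfl,
      ?_, ⟨QH.mp e he R, ?_⟩, ?_⟩
    · rw [Nat.one_le_iff_ne_zero, Finset.card_ne_zero, Finset.image_nonempty]
      obtain ⟨w, hw⟩ := hA
      exact ⟨w, by simpa [hAdef] using hw⟩
    · intro ℓ hℓ
      obtain ⟨w, -, rfl⟩ := Finset.mem_image.1 hℓ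
      exact ⟨hre ▸ QH.ln_le e w, QH.ln_finrank e he w⟩
    · intro ℓ hℓ
      obtain ⟨w, hw, rfl⟩ := Finset.mem_image.1 hℓ
      exact (hmem R w).2 (hR w hw)
    · ext P
      rw [Set.mem_iUnion₂]
      constructor
      · rintro ⟨h1, h2⟩
        obtain ⟨T, rfl⟩ := QH.mp_surj e he P (by rw [hre]; exact h2)
        obtain ⟨w, hw, hTw⟩ := (hT T).1 (by simpa [QH.pb] using h1)
        exact ⟨QH.ln e w, Finset.mem_image_of_mem _ hw, (hmem T w).2 hTw⟩
      · rintro ⟨ℓ, hℓ, hP⟩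
        obtain ⟨w, hw, rfl⟩ := Finset.mem_image.1 hℓ
        have hP' : P.1 ≤ QH.ln e w := hP
        have hPr : P.1 ≤ LinearMap.range e := le_trans hP' (QH.ln_le e w)
        obtain ⟨T, rfl⟩ := QH.mp_surj e he P hPr
        refine ⟨?_, by rw [hre] at hPr; exact hPr⟩
        have := (hT T).2 ⟨w, hw, (hmem T w).1 hP'⟩
        simpa [QH.pb] using this
  · left
    push Not at hA
    obtain ⟨g, hg, A, hA1, hA2, hA3⟩ := QH.herm_of_unital hp hp3 rfl hF' hG
      (fun m => (hall m).resolve_right (hA m))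
    have hginj := LinearMap.ker_eq_bot.1 hg
    have hgsurj : LinearMap.range g = ⊤ := LinearMap.ker_eq_bot_iff_range_eq_top.1 hg
    have hg0 : ∀ y, y ≠ 0 → g y ≠ 0 := fun y hy h => hy (LinearMap.ker_eq_bot'.1 hg y h)
    refine ⟨e ∘ₗ g, ?_, ?_, A, hA1, hA2, ?_⟩
    · rw [LinearMap.ker_eq_bot]
      exact (LinearMap.ker_eq_bot.1 he).comp hginj
    · rw [LinearMap.range_comp, hgsurj, Submodule.map_top, hre]
    · ext P
      have key : ∀ y : Fin 3 → F, y ≠ 0 → P.1 = Submodule.span F {e (g y)} →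
          (P ∈ V ↔ ∑ i, ∑ j, y i * A i j * (y j) ^ (p ^ 2) = 0) := by
        intro y hy hP
        rw [← hA3 y hy, QH.mkp_of _ (hg0 y hy)]
        have : QH.mp e he (Projectivization.mk F (g y) (hg0 y hy)) = P :=
          Subtype.ext ((QH.mp_mk e he _ _).trans hP.symm)
        simp [QH.pb, this]
      constructor
      · rintro ⟨h1, h2⟩
        obtain ⟨v, hv, hPv⟩ := QH.exists_gen P
        have h3 : P.1 ≤ π := h2
        rw [hPv, Submodule.span_singleton_le_iff_mem, ← hre] at h3
        obtain ⟨z, rfl⟩ := h3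
        obtain ⟨y, rfl⟩ : z ∈ LinearMap.range g := by rw [hgsurj]; trivial
        have hy : y ≠ 0 := by rintro rfl; simp at hv
        exact ⟨y, hy, hPv, (key y hy hPv).1 h1⟩
      · rintro ⟨y, hy, hP, hs⟩
        refine ⟨(key y hy hP).2 hs, ?_⟩
        show P.1 ≤ π
        rw [hP, Submodule.span_singleton_le_iff_mem, ← hre]
        exact ⟨g y, rfl⟩
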